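/- (Feingold–Frenkel level-1 root multiplicities.) Let 𝔉 = g(A_F) with A_F = [[2,−2,0],[−2,2,−1],[0,−1,2]]. For all a, b ∈ ℕ, let α = aα₁ + bα₂ + α₃ and suppose (α|α) ≤ 0. Then mult(α) = p(1 − (α|α)/2), where p is the classical partition function. (Note (α|α) is an even integer, so 1 − (α|α)/2 is a positive integer.) -/

import Mathlib

/-! Serre presentation of the Kac–Moody Lie algebra `g(A)` of a generalized Cartan
matrix `A`. -/

/-- Generators `e i`, `f i`, `h i` of the Serre presentation. -/
inductive ChevalleyGen (ℓ : ℕ) : Type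
  | e : Fin ℓ → ChevalleyGen ℓ
  | f : Fin ℓ → ChevalleyGen ℓ
  | h : Fin ℓ → ChevalleyGen ℓ

namespace KacMoody

variable {ℓ : ℕ}

/-- The free Lie algebra over `ℂ` on the generators. -/
abbrev FreeLie (ℓ : ℕ) : Type := FreeLieAlgebra ℂ (ChevalleyGen ℓ)

noncomputable def E (i : Fin ℓ) : FreeLie ℓ := FreeLieAlgebra.of ℂ (ChevalleyGen.e i)
noncomputable def F (i : Fin ℓ) : FreeLie ℓ := FreeLieAlgebra.of ℂ (ChevalleyGen.f i)
noncomputable def H (i : Fin ℓ) : FreeLie ℓ := FreeLieAlgebra.of ℂ (ChevalleyGen.h i)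

open LieAlgebra in
/-- The defining relations of the Serre presentation: `⁅h i, h j⁆ = 0`,
`⁅e i, f j⁆ = δ_{ij} h i`, `⁅h i, e j⁆ = A i j • e j`, `⁅h i, f j⁆ = −A i j • f j`, and the
Serre relations `(ad (e i))^(1 − A i j) (e j) = 0`, `(ad (f i))^(1 − A i j) (f j) = 0` for
`i ≠ j`. -/
noncomputable def serreRelations (A : Matrix (Fin ℓ) (Fin ℓ) ℤ) : Set (FreeLie ℓ) :=
  {x : FreeLie ℓ | ∃ i j : Fin ℓ, x = ⁅H i, H j⁆} ∪
  {x : FreeLie ℓ | ∃ i j : Fin ℓ, x = ⁅E i, F j⁆ - if i = j then H i else 0} ∪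
  {x : FreeLie ℓ | ∃ i j : Fin ℓ, x = ⁅H i, E j⁆ - (A i j : ℂ) • E j} ∪
  {x : FreeLie ℓ | ∃ i j : Fin ℓ, x = ⁅H i, F j⁆ + (A i j : ℂ) • F j} ∪
  {x : FreeLie ℓ | ∃ i j : Fin ℓ, i ≠ j ∧ x = ((ad ℂ (FreeLie ℓ) (E i)) ^ (1 - A i j).toNat) (E j)} ∪
  {x : FreeLie ℓ | ∃ i j : Fin ℓ, i ≠ j ∧ x = ((ad ℂ (FreeLie ℓ) (F i)) ^ (1 - A i j).toNat) (F j)}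

/-- The Lie ideal of the free Lie algebra generated by the Serre relations. -/
noncomputable def serreIdeal (A : Matrix (Fin ℓ) (Fin ℓ) ℤ) : LieIdeal ℂ (FreeLie ℓ) :=
  LieSubmodule.lieSpan ℂ (FreeLie ℓ) (serreRelations A)

/-- The Serre-presented Lie algebra `g(A)` of a generalized Cartan matrix `A`: the quotient
of the free Lie algebra on the generators `e i`, `f i`, `h i` by the ideal generated by
the defining relations. -/
abbrev gA (A : Matrix (Fin ℓ) (Fin ℓ) ℤ) : Type := FreeLie ℓ ⧸ serreIdeal A

/-- The image of `h i` in `g(A)`. -/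
noncomputable def Hbar (A : Matrix (Fin ℓ) (Fin ℓ) ℤ) (i : Fin ℓ) : gA A :=
  LieSubmodule.Quotient.mk' (serreIdeal A) (H i)

open LieAlgebra in
/-- The root space `g_α` for `α = ∑ c i • α i`: all `x` with
`⁅h i, x⁆ = (∑ j, A i j * c j) • x` for every `i`. -/
noncomputable def rootSpace (A : Matrix (Fin ℓ) (Fin ℓ) ℤ) (c : Fin ℓ → ℤ) :
    Submodule ℂ (gA A) :=
  ⨅ i : Fin ℓ, Module.End.eigenspace (ad ℂ (gA A) (Hbar A i)) ((∑ j, A i j * c j : ℤ) : ℂ)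

/-- The multiplicity of the root `α = ∑ c i • α i`: the dimension of `g_α`. -/
noncomputable def mult (A : Matrix (Fin ℓ) (Fin ℓ) ℤ) (c : Fin ℓ → ℤ) : ℕ :=
  Module.finrank ℂ (rootSpace A c)

end KacMoody

/-- `p n` is the classical partition function: the number of partitions of `n`. -/
def p (n : ℕ) : ℕ := Fintype.card (Nat.Partition n)

/-- The generalized Cartan matrix of the rank 3 hyperbolic Kac–Moody algebra `𝔉` of type
`HA₁⁽¹⁾`. -/
def AF : Matrix (Fin 3) (Fin 3) ℤ := !![2, -2, 0; -2, 2, -1; 0, -1, 2]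

/-- The invariant symmetric bilinear form `(α|α) = ∑_{i,j} c i · A i j · c j` for
`α = ∑ c i • α i`. -/
def normAF (c : Fin 3 → ℤ) : ℤ := ∑ i, ∑ j, c i * AF i j * c j

/-! The subalgebra of `𝔉` generated by `e₁`, `e₂` is the positive part of affine `sl₂`, spanned
by the loop elements `e ⊗ tⁿ`, `f ⊗ tⁿ⁺¹`, `h ⊗ tⁿ⁺¹`. It acts on the elements of level one, those
in which `α₃` has coefficient `1`, and these are generated by the lowest weight vector `e₃`, a
vacuum vector for this action.

Upper bound: the infinitesimal reparametrization `t ↦ t + εt²` is an automorphism of the loop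
algebra which preserves the vacuum relations, and it yields by induction on the degree that the
level one elements are spanned by words in the `h ⊗ tⁿ⁺¹` applied to extremal vectors `v_c` for
`c : ℤ`. The word `h ⊗ t ^ n₁ ⋯ h ⊗ t ^ nₖ` applied to `v_c` has weight `(c² + c + n, c² + n, 1)`
with `n = ∑ nᵢ`. So the root space of a given `α` of level one is spanned by vectors indexed by the
partitions of a single `n`, which is `1 - (α|α) / 2`.

Lower bound: in the homogeneous vertex operator realization on `ℂ[x₀, x₁, …] ⊗ ℂ[ℤ]` the
`h ⊗ tⁿ⁺¹` act as multiplication by `xₙ`, so these words are linearly independent there. Letting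
`e₃` act as the translation by the vacuum turns this module `M` into a representation of `n₊` by
affine transformations of `M`. This receives an intertwining map from the Serre quotient of the
Verma module, on which all of `𝔉` acts. Hence the words are linearly independent in `𝔉`. -/

namespace KacMoody

open LieAlgebra

attribute [local instance] LieRing.ofAssociativeRing

/-! ## The loop relations -/

section ShiftedSequence

variable {K L : Type*} [Field K] [LieRing L] [LieAlgebra K L] {g : ℕ → L} {s : K}

theorem lie_add_eq_neg_of_shift {d : L} {k : ℕ} (hs : s ≠ 0) (hd : ∀ n, ⁅d, g n⁆ = s • g (n + k))
    {m n : ℕ} (h : ⁅g m, g n⁆ = 0) : ⁅g (m + k), g n⁆ = -⁅g m, g (n + k)⁆ := by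
  have leibniz := leibniz_lie d (g m) (g n)
  rw [h, lie_zero, hd, hd, smul_lie, lie_smul, ← smul_add] at leibniz
  exact eq_neg_of_add_eq_zero_left ((smul_eq_zero.1 leibniz.symm).resolve_left hs)

theorem lie_eq_neg_one_pow_smul_of_shift {d : L} (hs : s ≠ 0)
    (hd : ∀ n, ⁅d, g n⁆ = s • g (n + 1)) {N : ℕ} (h : ∀ m n, m + n = N → ⁅g m, g n⁆ = 0) :
    ∀ m n, m + n = N + 1 → ⁅g m, g n⁆ = (-1 : K) ^ m • ⁅g 0, g (N + 1)⁆
  | 0, n, hn => by rw [pow_zero, one_smul, ← hn, zero_add]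
  | m + 1, n, hn => by
    rw [lie_add_eq_neg_of_shift hs hd (h m n (by omega)),
      lie_eq_neg_one_pow_smul_of_shift hs hd h m (n + 1) (by omega), pow_succ, mul_neg_one,
      neg_smul]

/-- In total degree `N + 1` the shift by one makes the brackets alternate in sign. For odd `N`
this contradicts antisymmetry, and for even `N` it contradicts the shift by two. -/
theorem lie_eq_zero_of_shift [CharZero K] {d₁ d₂ : L} (hs : s ≠ 0)
    (hd₁ : ∀ n, ⁅d₁, g n⁆ = s • g (n + 1)) (hd₂ : ∀ n, ⁅d₂, g n⁆ = s • g (n + 2))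
    (h01 : ⁅g 0, g 1⁆ = 0) (m n : ℕ) : ⁅g m, g n⁆ = 0 := by
  let : Module ℚ L := Module.compHom L (algebraMap ℚ K)
  have : IsAddTorsionFree L := .of_module_rat L
  suffices H : ∀ N m n, m + n = N → ⁅g m, g n⁆ = 0 from H _ m n rfl
  intro N
  induction N using Nat.strong_induction_on with
  | _ N ih =>
    obtain _ | N := N
    · rintro m n h
      obtain ⟨rfl, rfl⟩ : m = 0 ∧ n = 0 := by omega
      exact lie_self _
    have alternating := lie_eq_neg_one_pow_smul_of_shift hs hd₁ (ih N N.lt_succ_self)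
    suffices zero : ⁅g 0, g (N + 1)⁆ = 0 by
      intro m n h
      rw [alternating m n h, zero, smul_zero]
    obtain hN | hN := Nat.even_or_odd N
    · obtain _ | _ | M := N
      · exact h01
      · exact absurd hN (by decide)
      · have shift_two :=
          lie_add_eq_neg_of_shift hs hd₂ (ih (M + 1) (by omega) 0 (M + 1) (by omega))
        rw [alternating (0 + 2) (M + 1) (by omega), zero_add, neg_one_sq, one_smul] at shift_two
        exact self_eq_neg.1 shift_two
    · have antisymm := alternating (N + 1) 0 rfl
      rw [hN.add_one.neg_one_pow, one_smul, ← lie_skew, neg_eq_iff_eq_neg] at antisymm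
      exact self_eq_neg.1 antisymm

end ShiftedSequence

/-- Elements `e n`, `f n`, `h n` satisfying the relations of `e ⊗ tⁿ`, `f ⊗ tⁿ⁺¹`, `h ⊗ tⁿ⁺¹`, the
standard basis of the positive part of the loop algebra of `sl₂`. -/
structure LoopTriple (K L : Type*) [CommRing K] [LieRing L] [LieAlgebra K L] where
  e : ℕ → L
  f : ℕ → L
  h : ℕ → L
  lie_e_e : ∀ m n, ⁅e m, e n⁆ = 0
  lie_f_f : ∀ m n, ⁅f m, f n⁆ = 0
  lie_h_h : ∀ m n, ⁅h m, h n⁆ = 0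
  lie_e_f : ∀ m n, ⁅e m, f n⁆ = h (m + n)
  lie_h_e : ∀ m n, ⁅h m, e n⁆ = (2 : K) • e (m + n + 1)
  lie_h_f : ∀ m n, ⁅h m, f n⁆ = -((2 : K) • f (m + n + 1))

section LoopElements

variable (K : Type*) [Field K] {L : Type*} [LieRing L] [LieAlgebra K L]

/-- The element `e ⊗ tⁿ` of the positive part of affine `sl₂`, built from the Chevalley generators
`x = e ⊗ 1` and `y = f ⊗ t`. -/
noncomputable def loopE (x y : L) : ℕ → L
  | 0 => x
  | n + 1 => (2⁻¹ : K) • ⁅⁅x, y⁆, loopE x y n⁆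

/-- The element `f ⊗ tⁿ⁺¹`; the diagram automorphism exchanging `x` and `y` takes `e ⊗ tⁿ` to it. -/
noncomputable def loopF (x y : L) : ℕ → L := loopE K y x

/-- The element `h ⊗ tⁿ⁺¹`. -/
noncomputable def loopH (x y : L) (n : ℕ) : L := ⁅x, loopF K x y n⁆

/-- The relation `[e ⊗ tᵐ, f ⊗ tⁿ⁺¹] = h ⊗ tᴺ⁺¹` for all `m + n = N`, which is established by
induction on `N`. -/
def LoopEF (x y : L) (N : ℕ) : Prop :=
  ∀ m n, m + n = N → ⁅loopE K x y m, loopF K x y n⁆ = loopH K x y N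

variable {K} {x y : L} {N : ℕ}

theorem loopEF_zero : LoopEF K x y 0 := by
  rintro m n h
  obtain ⟨rfl, rfl⟩ : m = 0 ∧ n = 0 := by omega
  rfl

theorem LoopEF.loopH_swap (h : LoopEF K x y N) : loopH K y x N = -loopH K x y N := by
  rw [← h N 0 rfl, lie_skew]
  rfl

theorem LoopEF.symm (h : LoopEF K x y N) : LoopEF K y x N := by
  intro m n hmn
  rw [h.loopH_swap, ← h n m (by omega), lie_skew]
  rfl

theorem loopE_zero_lie_loopE_one (hx : ⁅x, ⁅x, ⁅x, y⁆⁆⁆ = 0) :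
    ⁅loopE K x y 0, loopE K x y 1⁆ = 0 := by
  rw [loopE, loopE, loopE, lie_smul, ← lie_skew ⁅x, y⁆ x, lie_neg, hx, neg_zero, smul_zero]

section CharZero

variable [CharZero K]

theorem lie_lie_loopE (n : ℕ) : ⁅⁅x, y⁆, loopE K x y n⁆ = (2 : K) • loopE K x y (n + 1) := by
  rw [loopE, smul_inv_smul₀ two_ne_zero]

theorem lie_lie_loopF (n : ℕ) : ⁅⁅x, y⁆, loopF K x y n⁆ = -((2 : K) • loopF K x y (n + 1)) := by
  rw [← lie_skew x y, neg_lie]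
  exact congrArg Neg.neg (lie_lie_loopE n)

theorem LoopEF.loopH_lie_loopE_zero (h : LoopEF K x y N)
    (he : ⁅loopE K x y N, loopE K x y 0⁆ = 0) :
    ⁅loopH K x y N, loopE K x y 0⁆ = (2 : K) • loopE K x y (N + 1) := by
  rw [← h N 0 rfl, lie_lie, he, lie_zero, sub_zero, ← lie_lie_loopE, ← lie_skew (loopF K x y 0),
    lie_neg, lie_skew]
  rfl

theorem LoopEF.loopH_lie_loopF_zero (h : LoopEF K x y N)
    (hf : ⁅loopF K x y N, loopF K x y 0⁆ = 0) :
    ⁅loopH K x y N, loopF K x y 0⁆ = -((2 : K) • loopF K x y (N + 1)) := by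
  rw [← neg_eq_iff_eq_neg, ← neg_lie, ← h.loopH_swap]
  exact h.symm.loopH_lie_loopE_zero hf

theorem LoopEF.loopE_succ_lie_loopF (h : LoopEF K x y N) {m n : ℕ} (hmn : m + n = N) :
    ⁅loopE K x y (m + 1), loopF K x y n⁆ =
      ⁅loopE K x y m, loopF K x y (n + 1)⁆ + (2⁻¹ : K) • ⁅⁅x, y⁆, loopH K x y N⁆ := by
  rw [← h m n hmn, leibniz_lie ⁅x, y⁆, lie_lie_loopE, lie_lie_loopF, smul_lie, lie_neg, lie_smul,
    smul_add, smul_neg, inv_smul_smul₀ two_ne_zero, inv_smul_smul₀ two_ne_zero]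
  abel

theorem LoopEF.loopE_lie_loopF_eq_add (h : LoopEF K x y N) :
    ∀ m n, m + n = N + 1 → ⁅loopE K x y m, loopF K x y n⁆ =
      loopH K x y (N + 1) + ((m : K) / 2) • ⁅⁅x, y⁆, loopH K x y N⁆
  | 0, n, hn => by rw [Nat.cast_zero, zero_div, zero_smul, add_zero, ← hn, zero_add]; rfl
  | m + 1, n, hn => by
    rw [h.loopE_succ_lie_loopF (by omega), h.loopE_lie_loopF_eq_add m (n + 1) (by omega)]
    push_cast
    module

/-- Expanding `[h tᴺ⁺¹, [e, f t]]` by the Leibniz rule gives `N + 1` times `[h t, h tᴺ⁺¹]`. -/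
theorem LoopEF.lie_lie_loopH (h : LoopEF K x y N) (he : ⁅loopE K x y N, loopE K x y 0⁆ = 0)
    (hf : ⁅loopF K x y N, loopF K x y 0⁆ = 0) : ⁅⁅x, y⁆, loopH K x y N⁆ = 0 := by
  have leibniz := leibniz_lie (loopH K x y N) (loopE K x y 0) (loopF K x y 0)
  rw [h.loopH_lie_loopE_zero he, h.loopH_lie_loopF_zero hf, lie_neg, smul_lie, lie_smul,
    h.loopE_lie_loopF_eq_add (N + 1) 0 rfl, h.loopE_lie_loopF_eq_add 0 (N + 1) (zero_add _),
    ← lie_skew] at leibniz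
  have multiple : ((N + 2 : ℕ) : K) • ⁅⁅x, y⁆, loopH K x y N⁆ = 0 := by
    change -⁅⁅x, y⁆, loopH K x y N⁆ = _ at leibniz
    push_cast at leibniz ⊢
    linear_combination (norm := module) -leibniz
  exact (smul_eq_zero.1 multiple).resolve_left (Nat.cast_ne_zero.2 (by omega))

theorem LoopEF.succ (h : LoopEF K x y N) (he : ⁅loopE K x y N, loopE K x y 0⁆ = 0)
    (hf : ⁅loopF K x y N, loopF K x y 0⁆ = 0) : LoopEF K x y (N + 1) := by
  intro m n hmn
  rw [h.loopE_lie_loopF_eq_add m n hmn, h.lie_lie_loopH he hf, smul_zero, add_zero]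

theorem LoopEF.loopH_lie_loopE (h : LoopEF K x y N) (he : ⁅loopE K x y N, loopE K x y 0⁆ = 0)
    (hf : ⁅loopF K x y N, loopF K x y 0⁆ = 0) (n : ℕ) :
    ⁅loopH K x y N, loopE K x y n⁆ = (2 : K) • loopE K x y (N + n + 1) := by
  induction n with
  | zero => exact h.loopH_lie_loopE_zero he
  | succ n ih =>
    rw [loopE, lie_smul, leibniz_lie, ← lie_skew (loopH K x y N), h.lie_lie_loopH he hf, ih,
      lie_smul, lie_lie_loopE, neg_zero, zero_lie, zero_add, smul_comm (2 : K),
      inv_smul_smul₀ two_ne_zero, Nat.add_assoc N]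

theorem LoopEF.loopH_lie_loopF (h : LoopEF K x y N) (he : ⁅loopE K x y N, loopE K x y 0⁆ = 0)
    (hf : ⁅loopF K x y N, loopF K x y 0⁆ = 0) (n : ℕ) :
    ⁅loopH K x y N, loopF K x y n⁆ = -((2 : K) • loopF K x y (N + n + 1)) := by
  rw [← neg_eq_iff_eq_neg, ← neg_lie, ← h.loopH_swap]
  exact h.symm.loopH_lie_loopE hf he n

theorem loopE_lie_loopE (hx : ⁅x, ⁅x, ⁅x, y⁆⁆⁆ = 0) (hy : ⁅y, ⁅y, ⁅y, x⁆⁆⁆ = 0) (m n : ℕ) :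
    ⁅loopE K x y m, loopE K x y n⁆ = 0 := by
  have he : ⁅loopE K x y 1, loopE K x y 0⁆ = 0 := by
    rw [← lie_skew, loopE_zero_lie_loopE_one hx, neg_zero]
  have hf : ⁅loopF K x y 1, loopF K x y 0⁆ = 0 := by
    rw [← lie_skew, loopF, loopE_zero_lie_loopE_one hy, neg_zero]
  have degree_one : LoopEF K x y 1 := loopEF_zero.succ (lie_self _) (lie_self _)
  refine lie_eq_zero_of_shift (d₂ := loopH K x y 1) two_ne_zero lie_lie_loopE
    (fun n => ?_) (loopE_zero_lie_loopE_one hx) m n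
  rw [degree_one.loopH_lie_loopE he hf, show 1 + n + 1 = n + 2 by omega]

theorem loopEF (hx : ⁅x, ⁅x, ⁅x, y⁆⁆⁆ = 0) (hy : ⁅y, ⁅y, ⁅y, x⁆⁆⁆ = 0) (N : ℕ) :
    LoopEF K x y N := by
  induction N with
  | zero => exact loopEF_zero
  | succ N ih => exact ih.succ (loopE_lie_loopE hx hy _ _) (loopE_lie_loopE hy hx _ _)

theorem loopH_lie_loopE (hx : ⁅x, ⁅x, ⁅x, y⁆⁆⁆ = 0) (hy : ⁅y, ⁅y, ⁅y, x⁆⁆⁆ = 0) (m n : ℕ) :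
    ⁅loopH K x y m, loopE K x y n⁆ = (2 : K) • loopE K x y (m + n + 1) :=
  (loopEF hx hy m).loopH_lie_loopE (loopE_lie_loopE hx hy _ _) (loopE_lie_loopE hy hx _ _) n

theorem loopH_lie_loopF (hx : ⁅x, ⁅x, ⁅x, y⁆⁆⁆ = 0) (hy : ⁅y, ⁅y, ⁅y, x⁆⁆⁆ = 0) (m n : ℕ) :
    ⁅loopH K x y m, loopF K x y n⁆ = -((2 : K) • loopF K x y (m + n + 1)) :=
  (loopEF hx hy m).loopH_lie_loopF (loopE_lie_loopE hx hy _ _) (loopE_lie_loopE hy hx _ _) n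

theorem loopH_lie_loopH (hx : ⁅x, ⁅x, ⁅x, y⁆⁆⁆ = 0) (hy : ⁅y, ⁅y, ⁅y, x⁆⁆⁆ = 0) (m n : ℕ) :
    ⁅loopH K x y m, loopH K x y n⁆ = 0 := by
  rw [← loopEF hx hy n 0 n (zero_add n), leibniz_lie, loopH_lie_loopE hx hy,
    loopH_lie_loopF hx hy, smul_lie, lie_neg, lie_smul,
    loopEF hx hy (m + n + 1) (m + 0 + 1) n (by omega),
    loopEF hx hy (m + n + 1) 0 (m + n + 1) (by omega), add_neg_cancel]

/-- The Serre relations of type `A₁⁽¹⁾` imply the loop relations. -/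
noncomputable def LoopTriple.ofSerre (hx : ⁅x, ⁅x, ⁅x, y⁆⁆⁆ = 0) (hy : ⁅y, ⁅y, ⁅y, x⁆⁆⁆ = 0) :
    LoopTriple K L where
  e := loopE K x y
  f := loopF K x y
  h := loopH K x y
  lie_e_e := loopE_lie_loopE hx hy
  lie_f_f := loopE_lie_loopE hy hx
  lie_h_h := loopH_lie_loopH hx hy
  lie_e_f m n := loopEF hx hy (m + n) m n rfl
  lie_h_e := loopH_lie_loopE hx hy
  lie_h_f := loopH_lie_loopF hx hy

end CharZero

end LoopElements

/-! ## Loop representations and the reparametrization `t ↦ t + εt²` -/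

section Twist

variable {K N : Type*} [CommRing K] [AddCommGroup N] [Module K N]

theorem apply_apply_of_lie_eq {a b c : Module.End K N} (h : ⁅a, b⁆ = c) (u : N) :
    a (b u) = b (a u) + c u := by
  rw [← h, Ring.lie_def]
  simp

theorem lie_eq_of_apply_single {σ M : Type*} [AddCommGroup M] [Module K M]
    {a b c : Module.End K (σ →₀ M)}
    (h : ∀ i m, a (b (Finsupp.single i m)) =
      b (a (Finsupp.single i m)) + c (Finsupp.single i m)) : ⁅a, b⁆ = c :=
  Finsupp.lhom_ext fun i m => sub_eq_of_eq_add' (h i m)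

/-- The operator `a + εb` on `N ⊗ K[ε]`, where `ε² = 0` and `(u, w) : N × N` encodes `u ε + w`. -/
def twist (a b : Module.End K N) : Module.End K (N × N) :=
  (a ∘ₗ LinearMap.fst K N N + b ∘ₗ LinearMap.snd K N N).prod (a ∘ₗ LinearMap.snd K N N)

theorem twist_apply (a b : Module.End K N) (u : N × N) : twist a b u = (a u.1 + b u.2, a u.2) :=
  rfl

theorem twist_zero : twist (0 : Module.End K N) 0 = 0 := by
  ext <;> simp [twist_apply]

theorem twist_smul (s : K) (a b : Module.End K N) : twist (s • a) (s • b) = s • twist a b := by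
  ext <;> simp [twist_apply]

theorem twist_neg (a b : Module.End K N) : twist (-a) (-b) = -twist a b := by
  ext <;> simp [twist_apply]

theorem lie_twist (a b c d : Module.End K N) :
    ⁅twist a b, twist c d⁆ = twist ⁅a, c⁆ (⁅a, d⁆ + ⁅b, c⁆) := by
  ext <;> simp [Ring.lie_def, twist_apply]
  abel

/-- The effect of the substitution `t ↦ t + εt²` on a sequence of operators `a n = x ⊗ tⁿ⁺¹`. -/
def reparam (a : ℕ → Module.End K N) (n : ℕ) : Module.End K (N × N) :=
  twist (a n) (((n : K) + 1) • a (n + 1))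

theorem reparam_apply_inr (a : ℕ → Module.End K N) (n : ℕ) (v : N) :
    reparam a n (0, v) = (((n : K) + 1) • a (n + 1) v, a n v) := by
  simp [reparam, twist_apply]

open Finset in
/-- The coefficients of `a(z) b(z) v` for the generating series `a(z) = ∑ a n zⁿ` and
`b(z) = ∑ b n zⁿ`. -/
def conv (a b : ℕ → Module.End K N) (n : ℕ) (v : N) : N :=
  ∑ q ∈ antidiagonal n, a q.1 (b q.2 v)

open Finset in
theorem sum_antidiagonal_succ_smul (T : ℕ → ℕ → N) (n : ℕ) :
    ∑ q ∈ antidiagonal n, (((q.2 : K) + 1) • T q.1 (q.2 + 1) + ((q.1 : K) + 1) • T (q.1 + 1) q.2)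
      = ((n : K) + 1) • ∑ q ∈ antidiagonal (n + 1), T q.1 q.2 := by
  have left : ∑ q ∈ antidiagonal n, ((q.1 : K) + 1) • T (q.1 + 1) q.2 =
      ∑ q ∈ antidiagonal (n + 1), (q.1 : K) • T q.1 q.2 := by
    simp [Finset.Nat.sum_antidiagonal_succ]
  have right : ∑ q ∈ antidiagonal n, ((q.2 : K) + 1) • T q.1 (q.2 + 1) =
      ∑ q ∈ antidiagonal (n + 1), (q.2 : K) • T q.1 q.2 := by
    simp [Finset.Nat.sum_antidiagonal_succ']
  rw [sum_add_distrib, left, right, ← sum_add_distrib, smul_sum]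
  refine sum_congr rfl fun q hq => ?_
  rw [← add_smul, add_comm (q.2 : K), ← Nat.cast_add, mem_antidiagonal.1 hq, Nat.cast_succ]

theorem fst_conv_reparam (a b : ℕ → Module.End K N) (n : ℕ) (v : N) :
    (conv (reparam a) (reparam b) n (0, v)).1 = ((n : K) + 1) • conv a b (n + 1) v := by
  rw [conv, conv, ← sum_antidiagonal_succ_smul fun i j => a i (b j v), Prod.fst_sum]
  simp [reparam, twist_apply]

end Twist

namespace LoopTriple

section CommRing

variable {K N : Type*} [CommRing K] [AddCommGroup N] [Module K N]
  (R : LoopTriple K (Module.End K N))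

theorem e_e_apply (m n : ℕ) (u : N) : R.e m (R.e n u) = R.e n (R.e m u) := by
  simpa using apply_apply_of_lie_eq (R.lie_e_e m n) u

theorem f_f_apply (m n : ℕ) (u : N) : R.f m (R.f n u) = R.f n (R.f m u) := by
  simpa using apply_apply_of_lie_eq (R.lie_f_f m n) u

theorem e_f_apply (m n : ℕ) (u : N) : R.e m (R.f n u) = R.f n (R.e m u) + R.h (m + n) u :=
  apply_apply_of_lie_eq (R.lie_e_f m n) u

theorem h_e_apply (m n : ℕ) (u : N) :
    R.h m (R.e n u) = R.e n (R.h m u) + (2 : K) • R.e (m + n + 1) u :=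
  apply_apply_of_lie_eq (R.lie_h_e m n) u

theorem h_f_apply (m n : ℕ) (u : N) :
    R.h m (R.f n u) = R.f n (R.h m u) - (2 : K) • R.f (m + n + 1) u := by
  rw [sub_eq_add_neg]
  exact apply_apply_of_lie_eq (R.lie_h_f m n) u

/-- The representation on `N ⊗ K[ε]` obtained from `R` by the infinitesimal reparametrization
`t ↦ t + εt²` of the loop variable. -/
def double : LoopTriple K (Module.End K (N × N)) where
  e n := twist (R.e n) ((n : K) • R.e (n + 1))
  f := reparam R.f
  h := reparam R.h
  lie_e_e m n := by simp [lie_twist, R.lie_e_e, twist_zero]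
  lie_f_f m n := by simp [reparam, lie_twist, R.lie_f_f, twist_zero]
  lie_h_h m n := by simp [reparam, lie_twist, R.lie_h_h, twist_zero]
  lie_e_f m n := by
    simp only [reparam, lie_twist, lie_smul, smul_lie, R.lie_e_f, Nat.cast_add, ← add_assoc,
      add_right_comm m 1]
    congr 1
    module
  lie_h_e m n := by
    simp only [reparam, lie_twist, lie_smul, smul_lie, R.lie_h_e, ← twist_smul, Nat.cast_add,
      Nat.cast_one, ← add_assoc, add_right_comm m 1]
    congr 1
    module
  lie_h_f m n := by
    simp only [reparam, lie_twist, lie_smul, smul_lie, R.lie_h_f, ← twist_smul, ← twist_neg,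
      Nat.cast_add, Nat.cast_one, ← add_assoc, add_right_comm m 1]
    congr 1
    module

theorem double_e_succ : (fun n => R.double.e (n + 1)) = reparam fun n => R.e (n + 1) := by
  ext1 n
  simp [double, reparam]

/-- The relations satisfied by the lowest weight vector of level one: `v` is killed by `e ⊗ 1` and
by the square of `f ⊗ t`. -/
structure IsVacuum (v : N) : Prop where
  e_zero : R.e 0 v = 0
  f_zero_f_zero : R.f 0 (R.f 0 v) = 0

end CommRing

section Vacuum

variable {K N : Type*} [Field K] [CharZero K] [AddCommGroup N] [Module K N]
  {R : LoopTriple K (Module.End K N)} {v : N}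

theorem IsVacuum.f_one (hv : R.IsVacuum v) : R.f 1 v = -R.h 0 (R.f 0 v) := by
  have h_f := R.h_f_apply 0 0 v
  have e_f_f := R.e_f_apply 0 0 (R.f 0 v)
  rw [hv.f_zero_f_zero, map_zero, R.e_f_apply 0 0 v, hv.e_zero, map_zero, zero_add] at e_f_f
  linear_combination (norm := module) (-1 / 2 : K) • e_f_f + (1 / 2 : K) • h_f

theorem IsVacuum.f_zero_f_one (hv : R.IsVacuum v) : R.f 0 (R.f 1 v) = 0 := by
  have f_f_one := congrArg (R.f 0) hv.f_one
  have h_f_f := R.h_f_apply 0 0 (R.f 0 v)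
  rw [map_neg] at f_f_one
  rw [hv.f_zero_f_zero, map_zero] at h_f_f
  have multiple : (3 : K) • R.f 0 (R.f 1 v) = 0 := by
    linear_combination (norm := module) f_f_one + h_f_f + (2 : K) • R.f_f_apply 0 1 v
  exact (smul_eq_zero.1 multiple).resolve_left three_ne_zero

theorem IsVacuum.two_smul_e_one_f_zero (hv : R.IsVacuum v) :
    (2 : K) • R.e 1 (R.f 0 v) = R.h 1 v + R.h 0 (R.h 0 v) := by
  have e_f_one := congrArg (R.e 0) hv.f_one
  have h_e_f := R.h_e_apply 0 0 (R.f 0 v)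
  rw [map_neg, R.e_f_apply, hv.e_zero, map_zero] at e_f_one
  rw [R.e_f_apply 0 0 v, hv.e_zero, map_zero, zero_add] at h_e_f
  linear_combination (norm := module) -e_f_one - h_e_f

theorem IsVacuum.h_zero_e_one (hv : R.IsVacuum v) : R.h 0 (R.e 1 v) = R.e 2 v := by
  have e_e_f := congrArg (R.e 0) hv.two_smul_e_one_f_zero
  rw [map_smul, map_add, R.e_e_apply 0 1, R.e_f_apply 0 0 v, hv.e_zero, map_zero, zero_add] at e_e_f
  have h_e_h := R.h_e_apply 0 0 (R.h 0 v)
  have h_h_e := congrArg (R.h 0) (R.h_e_apply 0 0 v)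
  have h_one_e := R.h_e_apply 1 0 v
  rw [map_add, map_smul] at h_h_e
  simp only [hv.e_zero, map_zero] at h_h_e h_one_e
  have multiple : (6 : K) • (R.h 0 (R.e 1 v) - R.e 2 v) = 0 := by
    linear_combination (norm := module)
      e_e_f - h_e_h - h_one_e - h_h_e + (4 : K) • R.h_e_apply 0 1 v
  exact sub_eq_zero.1 ((smul_eq_zero.1 multiple).resolve_left (by norm_num))

theorem IsVacuum.e_one_e_one (hv : R.IsVacuum v) : R.e 1 (R.e 1 v) = 0 := by
  have e_h_e := congrArg (R.e 0) hv.h_zero_e_one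
  have h_e_e := R.h_e_apply 0 0 (R.e 1 v)
  rw [R.e_e_apply 0 1 v, hv.e_zero, map_zero, map_zero] at h_e_e
  rw [R.e_e_apply 0 2 v, hv.e_zero, map_zero] at e_h_e
  have multiple : (2 : K) • R.e 1 (R.e 1 v) = 0 := by
    linear_combination (norm := module) -e_h_e - h_e_e
  exact (smul_eq_zero.1 multiple).resolve_left two_ne_zero

theorem IsVacuum.double (hv : R.IsVacuum v) : R.double.IsVacuum (0, v) where
  e_zero := by simp [LoopTriple.double, twist_apply, hv.e_zero]
  f_zero_f_zero := by
    simp [LoopTriple.double, reparam, twist_apply, hv.f_zero_f_zero, R.f_f_apply 1 0 v,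
      hv.f_zero_f_one]

/-! Each of the next four identities is the coefficient of `zⁿ` in a relation between generating
series; the coefficient of `zⁿ⁺¹` is the `ε`-part of the coefficient of `zⁿ` for the double. -/

theorem IsVacuum.conv_f_f (n : ℕ) (hv : R.IsVacuum v) : conv R.f R.f n v = 0 := by
  induction n generalizing N with
  | zero => simpa [conv] using hv.f_zero_f_zero
  | succ n ih =>
    have eps := (fst_conv_reparam R.f R.f n v).symm.trans (congrArg Prod.fst (ih hv.double))
    exact (smul_eq_zero.1 eps).resolve_left n.cast_add_one_ne_zero

theorem IsVacuum.conv_e_e (n : ℕ) (hv : R.IsVacuum v) :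
    conv (fun n => R.e (n + 1)) (fun n => R.e (n + 1)) n v = 0 := by
  induction n generalizing N with
  | zero => simpa [conv] using hv.e_one_e_one
  | succ n ih =>
    have eps := congrArg Prod.fst (ih hv.double)
    rw [double_e_succ, fst_conv_reparam] at eps
    exact (smul_eq_zero.1 eps).resolve_left n.cast_add_one_ne_zero

theorem IsVacuum.smul_f_succ (n : ℕ) (hv : R.IsVacuum v) :
    ((n : K) + 1) • R.f (n + 1) v = -conv R.h R.f n v := by
  induction n generalizing N with
  | zero => simpa [conv] using hv.f_one
  | succ n ih =>
    have eps := (congrArg Prod.fst (ih hv.double)).trans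
      (congrArg Neg.neg (fst_conv_reparam R.h R.f n v))
    simp only [LoopTriple.double, reparam_apply_inr, Prod.smul_mk] at eps
    rw [← smul_neg] at eps
    exact_mod_cast smul_right_injective N n.cast_add_one_ne_zero eps

theorem IsVacuum.smul_e_succ (n : ℕ) (hv : R.IsVacuum v) :
    ((n : K) + 1) • R.e (n + 2) v = conv R.h (fun n => R.e (n + 1)) n v := by
  induction n generalizing N with
  | zero => simpa [conv] using hv.h_zero_e_one.symm
  | succ n ih =>
    have eps := congrArg Prod.fst (ih hv.double)
    rw [double_e_succ, show R.double.h = reparam R.h from rfl, fst_conv_reparam,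
      congrFun R.double_e_succ (n + 1), reparam_apply_inr, Prod.smul_fst] at eps
    exact_mod_cast smul_right_injective N n.cast_add_one_ne_zero eps

end Vacuum

end LoopTriple

/-! ## The module generated by a vacuum vector -/

section CyclicSpan

variable {K N ι : Type*} [CommRing K] [AddCommGroup N] [Module K N]

/-- The span of the vectors obtained from `v` by applying words in the operators `k i`; the word
with letters `l` acts by `(l.map k).prod`. -/
def cyclicSpan (k : ι → Module.End K N) (v : N) : Submodule K N :=
  Submodule.span K (Set.range fun l : List ι => (l.map k).prod v)

theorem mem_cyclicSpan_self (k : ι → Module.End K N) (v : N) : v ∈ cyclicSpan k v :=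
  Submodule.subset_span ⟨[], rfl⟩

theorem cyclicSpan_le_comap (k : ι → Module.End K N) (v : N) (i : ι) :
    cyclicSpan k v ≤ (cyclicSpan k v).comap (k i) := by
  refine Submodule.span_le.2 ?_
  rintro _ ⟨l, rfl⟩
  exact Submodule.subset_span ⟨i :: l, by simp⟩

theorem apply_mem_cyclicSpan (k : ι → Module.End K N) (v : N) (i : ι) :
    k i v ∈ cyclicSpan k v :=
  cyclicSpan_le_comap k v i (mem_cyclicSpan_self k v)

theorem cyclicSpan_le {k : ι → Module.End K N} {v : N} {S : Submodule K N}
    (hS : ∀ i, S ≤ S.comap (k i)) (hv : v ∈ S) : cyclicSpan k v ≤ S := by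
  refine Submodule.span_le.2 ?_
  rintro _ ⟨l, rfl⟩
  induction l with
  | nil => exact hv
  | cons i l ih => simpa using hS i ih

theorem cyclicSpan_le_comap_of_commute_shift {k g : ℕ → Module.End K N} {s : K}
    (hkg : ∀ m n u, k m (g n u) = g n (k m u) + s • g (m + n + 1) u) {v : N} {T : Submodule K N}
    (hT : ∀ i, T ≤ T.comap (k i)) (hv : ∀ n, g n v ∈ T) (n : ℕ) :
    cyclicSpan k v ≤ T.comap (g n) := by
  refine (cyclicSpan_le (S := ⨅ n, T.comap (g n)) (fun i u hu => ?_) ?_).trans (iInf_le _ n)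
  · simp only [Submodule.mem_iInf, Submodule.mem_comap] at hu ⊢
    intro n
    rw [eq_sub_of_add_eq (hkg i n u).symm]
    exact T.sub_mem (hT i (hu n)) (T.smul_mem s (hu _))
  · simpa only [Submodule.mem_iInf, Submodule.mem_comap] using hv

end CyclicSpan

/-- The relations, in the current `g` and the commuting operators `k`, which hold for both of the
nilpotent currents of the loop algebra acting on a vacuum vector `v`. -/
structure IsVacuumCurrent {K N : Type*} [CommRing K] [AddCommGroup N] [Module K N]
    (g k : ℕ → Module.End K N) (v : N) : Prop where
  comm : ∀ m n u, g m (g n u) = g n (g m u)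
  apply_apply : ∀ m n u, k m (g n u) = g n (k m u) + (2 : K) • g (m + n + 1) u
  conv_self : ∀ n, conv g g n v = 0
  smul_succ : ∀ n : ℕ, ((n : K) + 1) • g (n + 1) v = conv k g n v

/-- The vectors `v`, `g 0 v`, `g 2 (g 0 v)`, `g 4 (g 2 (g 0 v))`, …. -/
def extremalChain {K N : Type*} [CommRing K] [AddCommGroup N] [Module K N]
    (g : ℕ → Module.End K N) (v : N) : ℕ → N
  | 0 => v
  | r + 1 => g (2 * r) (extremalChain g v r)

namespace IsVacuumCurrent

open Finset

variable {K N : Type*} [Field K] [AddCommGroup N] [Module K N]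
  {g k : ℕ → Module.End K N} {v : N}

theorem zero_zero (c : IsVacuumCurrent g k v) : g 0 (g 0 v) = 0 := by
  simpa [conv] using c.conv_self 0

variable [CharZero K]

theorem one_zero (c : IsVacuumCurrent g k v) : g 1 (g 0 v) = 0 := by
  have degree_one := c.conv_self 1
  simp only [conv, Nat.sum_antidiagonal_succ, Nat.antidiagonal_zero, sum_singleton, zero_add,
    c.comm 0 1, ← two_smul K] at degree_one
  exact (smul_eq_zero.1 degree_one).resolve_left two_ne_zero

theorem conv_shift (c : IsVacuumCurrent g k v) (n : ℕ) :
    conv (fun n => g (n + 2)) (fun n => g (n + 2)) n (g 0 v) = 0 := by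
  have total : conv g g (n + 4) (g 0 v) = 0 := by
    simp only [conv, c.comm _ 0, ← map_sum]
    exact (congrArg (g 0) (c.conv_self (n + 4))).trans (map_zero _)
  rw [conv, Nat.sum_antidiagonal_succ, Nat.sum_antidiagonal_succ, Nat.sum_antidiagonal_succ',
    Nat.sum_antidiagonal_succ'] at total
  simpa only [conv, c.zero_zero, c.one_zero, map_zero, zero_add, c.comm 0, c.comm (0 + 1)]
    using total

theorem smul_succ_shift (c : IsVacuumCurrent g k v) (n : ℕ) :
    ((n : K) + 1) • g (n + 3) (g 0 v) = conv k (fun n => g (n + 2)) n (g 0 v) := by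
  have swap : ∀ i j, g 0 (k i (g j v)) = k i (g j (g 0 v)) - (2 : K) • g (i + 1) (g j v) := by
    intro i j
    rw [c.comm j 0 v, c.apply_apply i 0, add_zero, add_sub_cancel_right]
  have image := congrArg (g 0) (c.smul_succ (n + 2))
  have square := c.conv_self (n + 3)
  rw [conv, Nat.sum_antidiagonal_succ] at square
  simp only [conv, map_smul, map_sum, swap, sum_sub_distrib, ← smul_sum] at image
  rw [Nat.sum_antidiagonal_succ', Nat.sum_antidiagonal_succ',
    eq_neg_of_add_eq_zero_right square, c.comm 0] at image
  simp only [c.zero_zero, c.one_zero, map_zero, zero_add] at image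
  rw [conv]
  push_cast at image
  linear_combination (norm := module) image

theorem shift (c : IsVacuumCurrent g k v) :
    IsVacuumCurrent (fun n => g (n + 2)) k (g 0 v) where
  comm _ _ := c.comm _ _
  apply_apply m n u := by
    rw [c.apply_apply, show m + (n + 2) + 1 = m + n + 1 + 2 by omega]
  conv_self := c.conv_shift
  smul_succ := c.smul_succ_shift

theorem extremalChain (c : IsVacuumCurrent g k v) (r : ℕ) :
    IsVacuumCurrent (fun n => g (n + 2 * r)) k (extremalChain g v r) := by
  induction r with
  | zero => exact c
  | succ r ih =>
    have next := ih.shift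
    simp only [Nat.zero_add, show ∀ n, n + 2 + 2 * r = n + 2 * (r + 1) by intro n; omega] at next
    exact next

theorem apply_extremalChain_of_lt (c : IsVacuumCurrent g k v) {n r : ℕ} (hn : n < 2 * r) :
    g n (KacMoody.extremalChain g v r) = 0 := by
  induction r with
  | zero => omega
  | succ r ih =>
    rw [KacMoody.extremalChain]
    obtain h | rfl | rfl : n < 2 * r ∨ n = 2 * r ∨ n = 1 + 2 * r := by omega
    · rw [c.comm, ih h, map_zero]
    · simpa only [Nat.zero_add] using (c.extremalChain r).zero_zero
    · simpa only [Nat.zero_add] using (c.extremalChain r).one_zero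

theorem apply_mem (c : IsVacuumCurrent g k v) {S : Submodule K N}
    (hS : ∀ i, S ≤ S.comap (k i)) (h0 : g 0 v ∈ S) (n : ℕ) : g n v ∈ S := by
  induction n using Nat.strong_induction_on with
  | _ n ih =>
    obtain _ | n := n
    · exact h0
    · rw [← S.smul_mem_iff (n.cast_add_one_ne_zero (R := K)), c.smul_succ n]
      exact S.sum_mem fun q hq => hS _ (ih _ (by have := mem_antidiagonal.1 hq; omega))

theorem apply_extremalChain_mem (c : IsVacuumCurrent g k v) {r : ℕ} {S : Submodule K N}
    (hS : ∀ i, S ≤ S.comap (k i)) (h0 : KacMoody.extremalChain g v (r + 1) ∈ S) (n : ℕ) :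
    g n (KacMoody.extremalChain g v r) ∈ S := by
  obtain hn | hn := lt_or_ge n (2 * r)
  · rw [c.apply_extremalChain_of_lt hn]
    exact S.zero_mem
  · obtain ⟨m, rfl⟩ := Nat.exists_eq_add_of_le' hn
    exact (c.extremalChain r).apply_mem hS (by rwa [Nat.zero_add]) m

end IsVacuumCurrent

namespace LoopTriple

section CommRing

variable {K N : Type*} [CommRing K] [AddCommGroup N] [Module K N]
  {R : LoopTriple K (Module.End K N)} {v : N}

theorem fst_mem_cyclicSpan_of_double {u : N × N} (hu : u ∈ cyclicSpan R.double.h (0, v)) :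
    u.1 ∈ cyclicSpan R.h v := by
  suffices h : cyclicSpan R.double.h (0, v) ≤ (cyclicSpan R.h v).prod (cyclicSpan R.h v) from
    (h hu).1
  refine cyclicSpan_le ?_ ⟨Submodule.zero_mem _, mem_cyclicSpan_self _ _⟩
  rintro i ⟨u₁, u₂⟩ ⟨h₁, h₂⟩
  have stable := cyclicSpan_le_comap R.h v
  exact ⟨Submodule.add_mem _ (stable i h₁) (Submodule.smul_mem _ _ (stable (i + 1) h₂)),
    stable i h₂⟩

theorem IsVacuum.e_zero_f (hv : R.IsVacuum v) (j : ℕ) : R.e 0 (R.f j v) = R.h j v := by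
  rw [R.e_f_apply, hv.e_zero, map_zero, zero_add, Nat.zero_add]

variable (R v) in
/-- The extremal vectors `v_c`, `c : ℤ`, in the module generated by the vacuum `v = v_0`; the
operators `e n` raise `c` by one and the `f n` lower it by one. -/
def extremal : ℤ → N
  | Int.ofNat r => extremalChain (fun n => R.e (n + 1)) v r
  | Int.negSucc r => extremalChain R.f v (r + 1)

theorem extremal_natCast (r : ℕ) :
    R.extremal v r = extremalChain (fun n => R.e (n + 1)) v r := rfl

theorem extremal_neg_natCast (r : ℕ) : R.extremal v (-r) = extremalChain R.f v r := by
  cases r <;> rfl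

theorem e_mem_cyclicSpan_of_mem {u w : N} (hw : ∀ n, R.e n v ∈ cyclicSpan R.h w)
    (hu : u ∈ cyclicSpan R.h v) (n : ℕ) : R.e n u ∈ cyclicSpan R.h w :=
  cyclicSpan_le_comap_of_commute_shift R.h_e_apply (cyclicSpan_le_comap _ _) hw n hu

theorem f_mem_cyclicSpan_of_mem {u w : N} (hw : ∀ n, R.f n v ∈ cyclicSpan R.h w)
    (hu : u ∈ cyclicSpan R.h v) (n : ℕ) : R.f n u ∈ cyclicSpan R.h w := by
  refine cyclicSpan_le_comap_of_commute_shift (s := -2) (fun m n u => ?_)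
    (cyclicSpan_le_comap _ _) hw n hu
  rw [R.h_f_apply, neg_smul, sub_eq_add_neg]

variable (R v) in
/-- The sum over all `c` of the spans of the words in the `h n` applied to the extremal vector
`v_c`. -/
def extremalSpan : Submodule K N := ⨆ c : ℤ, cyclicSpan R.h (R.extremal v c)

theorem mem_extremalSpan_self : v ∈ R.extremalSpan v :=
  le_iSup (fun c => cyclicSpan R.h (R.extremal v c)) 0 (mem_cyclicSpan_self R.h v)

end CommRing

variable {K N : Type*} [Field K] [CharZero K] [AddCommGroup N] [Module K N]
  {R : LoopTriple K (Module.End K N)} {v : N}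

theorem IsVacuum.smul_e_one_f_succ (hv : R.IsVacuum v) (j : ℕ) :
    ((j : K) + 3) • R.e 1 (R.f (j + 1) v) =
      (((j : K) + 1) • R.e 1 (R.f (j + 1) v) + R.e 2 (R.f j v))
        - R.h 0 (R.e 1 (R.f j v)) + R.h 0 (R.h (1 + j) v) + R.h (2 + j) v := by
  have f_h_e := congrArg (R.f j) hv.h_zero_e_one
  have h_f_e := R.h_f_apply 0 j (R.e 1 v)
  have h_e_f := congrArg (R.h 0) (R.e_f_apply 1 j v)
  have e_one_f := R.e_f_apply 1 (j + 1) v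
  simp only [map_add, Nat.zero_add, show 1 + (j + 1) = 2 + j by omega] at h_e_f h_f_e e_one_f
  linear_combination (norm := module)
    f_h_e + h_f_e + h_e_f + (2 : K) • e_one_f - R.e_f_apply 2 j v

/-- The `ε`-part of the statement for the double in degree `d` relates `e i f (j + 1) v` and
`e (i + 1) f j v` for `i + j = d`. -/
theorem IsVacuum.e_f_mem_cyclicSpan (d : ℕ) (hv : R.IsVacuum v) {i j : ℕ} (hij : i + j = d) :
    R.e i (R.f j v) ∈ cyclicSpan R.h v := by
  have h_mem := apply_mem_cyclicSpan R.h v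
  have stable := cyclicSpan_le_comap R.h v
  induction d generalizing N i j with
  | zero =>
    obtain ⟨rfl, rfl⟩ : i = 0 ∧ j = 0 := by omega
    rw [hv.e_zero_f]
    exact h_mem 0
  | succ d ih =>
    have neighbours : ∀ i j, i + j = d → ((j : K) + 1) • R.e i (R.f (j + 1) v)
        + (i : K) • R.e (i + 1) (R.f j v) ∈ cyclicSpan R.h v := by
      intro i j hij
      have eps := fst_mem_cyclicSpan_of_double (ih hv.double hij
        (apply_mem_cyclicSpan _ _) (cyclicSpan_le_comap _ _))
      simpa only [LoopTriple.double, reparam_apply_inr, twist_apply, map_smul,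
        LinearMap.smul_apply] using eps
    induction i generalizing j with
    | zero => rw [hv.e_zero_f]; exact h_mem j
    | succ i ihi =>
      obtain _ | i := i
      · rw [Nat.zero_add]
        obtain _ | j := j
        · rw [← Submodule.smul_mem_iff _ (two_ne_zero : (2 : K) ≠ 0), hv.two_smul_e_one_f_zero]
          exact Submodule.add_mem _ (h_mem 1) (stable 0 (h_mem 0))
        · have sum_mem := neighbours 1 j (by omega)
          rw [Nat.cast_one, one_smul] at sum_mem
          rw [← Submodule.smul_mem_iff _ (by norm_cast : (j : K) + 3 ≠ 0), hv.smul_e_one_f_succ]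
          exact Submodule.add_mem _ (Submodule.add_mem _ (Submodule.sub_mem _ sum_mem
            (stable 0 (ih hv (by omega) h_mem stable))) (stable 0 (h_mem _))) (h_mem _)
      · have sum_mem := neighbours (i + 1) j (by omega)
        rw [Submodule.add_mem_iff_right _ (Submodule.smul_mem _ _ (ihi (by omega)))] at sum_mem
        exact (Submodule.smul_mem_iff _ (Nat.cast_ne_zero.2 i.succ_ne_zero)).1 sum_mem

theorem IsVacuum.isVacuumCurrent_f (hv : R.IsVacuum v) :
    IsVacuumCurrent R.f (fun n => -R.h n) v where
  comm := R.f_f_apply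
  apply_apply m n u := by
    rw [LinearMap.neg_apply, R.h_f_apply, LinearMap.neg_apply, map_neg]
    module
  conv_self n := hv.conv_f_f n
  smul_succ n := by simpa [conv] using hv.smul_f_succ n

theorem IsVacuum.isVacuumCurrent_e (hv : R.IsVacuum v) :
    IsVacuumCurrent (fun n => R.e (n + 1)) R.h v where
  comm _ _ := R.e_e_apply _ _
  apply_apply _ _ := R.h_e_apply _ _
  conv_self n := hv.conv_e_e n
  smul_succ n := hv.smul_e_succ n

theorem IsVacuum.f_extremalChain_f_mem (hv : R.IsVacuum v) (r n : ℕ) :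
    R.f n (extremalChain R.f v r) ∈ cyclicSpan R.h (extremalChain R.f v (r + 1)) :=
  hv.isVacuumCurrent_f.apply_extremalChain_mem
    (fun i u hu => by simpa using cyclicSpan_le_comap _ _ i hu) (mem_cyclicSpan_self _ _) n

theorem IsVacuum.e_extremalChain_e_mem (hv : R.IsVacuum v) (r n : ℕ) :
    R.e n (extremalChain (fun n => R.e (n + 1)) v r) ∈
      cyclicSpan R.h (extremalChain (fun n => R.e (n + 1)) v (r + 1)) := by
  obtain _ | n := n
  · have e_zero : R.e 0 (extremalChain (fun n => R.e (n + 1)) v r) = 0 := by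
      induction r with
      | zero => exact hv.e_zero
      | succ r ih => rw [extremalChain, R.e_e_apply, ih, map_zero]
    rw [e_zero]
    exact Submodule.zero_mem _
  · exact hv.isVacuumCurrent_e.apply_extremalChain_mem (cyclicSpan_le_comap _ _)
      (mem_cyclicSpan_self _ _) n

theorem IsVacuum.e_extremalChain_f_mem (hv : R.IsVacuum v) (r n : ℕ) :
    R.e n (extremalChain R.f v (r + 1)) ∈ cyclicSpan R.h (extremalChain R.f v r) := by
  induction r generalizing n with
  | zero => exact hv.e_f_mem_cyclicSpan n rfl
  | succ r ih =>
    change R.e n (R.f _ _) ∈ _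
    rw [R.e_f_apply]
    exact Submodule.add_mem _ (f_mem_cyclicSpan_of_mem (hv.f_extremalChain_f_mem r) (ih n) _)
      (apply_mem_cyclicSpan _ _ _)

theorem IsVacuum.f_extremalChain_e_mem (hv : R.IsVacuum v) (r n : ℕ) :
    R.f n (extremalChain (fun n => R.e (n + 1)) v (r + 1)) ∈
      cyclicSpan R.h (extremalChain (fun n => R.e (n + 1)) v r) := by
  suffices e_f : R.e (2 * r + 1) (R.f n (extremalChain (fun n => R.e (n + 1)) v r)) ∈
      cyclicSpan R.h (extremalChain (fun n => R.e (n + 1)) v r) by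
    rw [R.e_f_apply] at e_f
    exact (Submodule.add_mem_iff_left _ (apply_mem_cyclicSpan _ _ _)).1 e_f
  induction r generalizing n with
  | zero => exact hv.e_f_mem_cyclicSpan _ rfl
  | succ r ih =>
    have f_mem := ih n
    rw [R.e_f_apply, Submodule.add_mem_iff_left _ (apply_mem_cyclicSpan _ _ _)] at f_mem
    exact e_mem_cyclicSpan_of_mem (hv.e_extremalChain_e_mem r) f_mem _

theorem IsVacuum.e_extremal_mem (hv : R.IsVacuum v) (c : ℤ) (n : ℕ) :
    R.e n (R.extremal v c) ∈ cyclicSpan R.h (R.extremal v (c + 1)) := by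
  obtain r | r := c
  · exact hv.e_extremalChain_e_mem r n
  · rw [show Int.negSucc r + 1 = -(r : ℤ) by omega, extremal_neg_natCast]
    exact hv.e_extremalChain_f_mem r n

theorem IsVacuum.f_extremal_mem (hv : R.IsVacuum v) (c : ℤ) (n : ℕ) :
    R.f n (R.extremal v c) ∈ cyclicSpan R.h (R.extremal v (c - 1)) := by
  obtain hc | hc := lt_or_ge 0 c
  · obtain ⟨r, rfl⟩ : ∃ r : ℕ, c = (r + 1 : ℕ) := ⟨(c - 1).toNat, by omega⟩
    rw [show ((r + 1 : ℕ) : ℤ) - 1 = r by omega, extremal_natCast, extremal_natCast]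
    exact hv.f_extremalChain_e_mem r n
  · obtain ⟨r, rfl⟩ : ∃ r : ℕ, c = -r := ⟨(-c).toNat, by omega⟩
    rw [show -(r : ℤ) - 1 = -(r + 1 : ℕ) by omega, extremal_neg_natCast, extremal_neg_natCast]
    exact hv.f_extremalChain_f_mem r n

theorem IsVacuum.extremalSpan_le_comap_e (hv : R.IsVacuum v) (n : ℕ) :
    R.extremalSpan v ≤ (R.extremalSpan v).comap (R.e n) :=
  iSup_le fun c _ hu => le_iSup (fun c => cyclicSpan R.h (R.extremal v c)) (c + 1)
    (e_mem_cyclicSpan_of_mem (hv.e_extremal_mem c) hu n)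

theorem IsVacuum.extremalSpan_le_comap_f (hv : R.IsVacuum v) (n : ℕ) :
    R.extremalSpan v ≤ (R.extremalSpan v).comap (R.f n) :=
  iSup_le fun c _ hu => le_iSup (fun c => cyclicSpan R.h (R.extremal v c)) (c - 1)
    (f_mem_cyclicSpan_of_mem (hv.f_extremal_mem c) hu n)

end LoopTriple

/-! ## Schur polynomials -/

section Schur

open PowerSeries

open Finset.HasAntidiagonal (antidiagonal mem_antidiagonal)

theorem eq_of_derivative_eq_mul {A : Type*} [CommRing A] [IsAddTorsionFree A] {G T U : A⟦X⟧}
    (hT : d⁄dX A T = G * T) (hU : d⁄dX A U = G * U) (h0 : coeff 0 T = coeff 0 U) : T = U := by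
  ext n
  induction n using Nat.strong_induction_on with
  | _ n ih =>
    obtain _ | n := n
    · exact h0
    have coeffs : coeff n (d⁄dX A T) = coeff n (d⁄dX A U) := by
      rw [hT, hU, coeff_mul, coeff_mul]
      refine Finset.sum_congr rfl fun q hq => ?_
      rw [ih q.2 (by have := mem_antidiagonal.1 hq; omega)]
    rw [coeff_derivative, coeff_derivative, ← Nat.cast_succ, ← nsmul_eq_mul', ← nsmul_eq_mul']
      at coeffs
    exact nsmul_right_injective n.succ_ne_zero coeffs

theorem derivative_map {A B : Type*} [CommRing A] [CommRing B] (φ : A →+* B) (T : A⟦X⟧) :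
    d⁄dX B (T.map φ) = (d⁄dX A T).map φ := by
  ext1 n
  simp [coeff_derivative]

section Geometric

variable {A : Type*} [CommRing A] (t : A)

/-- The geometric series `1 / (1 - tz)`. -/
def geometric : A⟦X⟧ := mk fun i => t ^ i

theorem geometric_mul_one_sub : geometric t * (1 - X * C t) = 1 := by
  ext1 n
  rw [mul_sub, mul_one, ← mul_assoc, map_sub, coeff_mul_C]
  obtain _ | n := n
  · simp [geometric]
  · simp [geometric, coeff_succ_mul_X, coeff_one, pow_succ]

theorem coeff_geometric_sq (n : ℕ) : coeff n (geometric t ^ 2) = ((n : A) + 1) * t ^ n := by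
  rw [sq, coeff_mul, Finset.sum_congr rfl (g := fun _ => t ^ n)]
  · simp
  · intro q hq
    rw [geometric, coeff_mk, coeff_mk, ← pow_add, mem_antidiagonal.1 hq]

end Geometric

section ExpCoeff

variable {K : Type*} [Field K]

/-- The coefficient of `zⁿ` in `exp (ε ∑ xᵢ zⁱ⁺¹ / (i + 1))`. -/
noncomputable def expCoeff (ε : K) : ℕ → MvPolynomial ℕ K
  | 0 => 1
  | n + 1 => (ε / ((n : K) + 1)) • ∑ i : Fin (n + 1), MvPolynomial.X (n - i) * expCoeff ε i

/-- The series `exp (ε ∑ xᵢ zⁱ⁺¹ / (i + 1))`. -/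
noncomputable def expSeries (ε : K) : (MvPolynomial ℕ K)⟦X⟧ := mk (expCoeff ε)

variable (K) in
/-- The series `∑ xᵢ zⁱ`. -/
noncomputable def varSeries : (MvPolynomial ℕ K)⟦X⟧ := mk fun i => MvPolynomial.X i

theorem coeff_zero_map_expSeries {A : Type*} [CommRing A] (φ : MvPolynomial ℕ K →+* A) (ε : K) :
    coeff 0 ((expSeries ε).map φ) = 1 := by
  simp [expSeries, expCoeff]

theorem map_varSeries_of_shift {A : Type*} [CommRing A] [Algebra K A] {t : A}
    {φ ψ : MvPolynomial ℕ K →ₐ[K] A} {σ : K}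
    (h : ∀ i, φ (MvPolynomial.X i) = ψ (MvPolynomial.X i) + σ • t ^ (i + 1)) :
    (varSeries K).map φ.toRingHom =
      (varSeries K).map ψ.toRingHom + σ • (C t * geometric t) := by
  ext1 n
  simp [varSeries, geometric, h, pow_succ']

variable [CharZero K]

theorem succ_smul_expCoeff_succ (ε : K) (n : ℕ) : ((n : K) + 1) • expCoeff ε (n + 1) =
    ε • ∑ q ∈ antidiagonal n, MvPolynomial.X q.1 * expCoeff ε q.2 := by
  rw [expCoeff, smul_smul, mul_div_cancel₀ _ n.cast_add_one_ne_zero,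
    Fin.sum_univ_eq_sum_range fun i => MvPolynomial.X (n - i) * expCoeff ε i,
    ← Finset.Nat.sum_antidiagonal_swap, Finset.Nat.sum_antidiagonal_eq_sum_range_succ_mk]
  rfl

theorem derivative_expSeries (ε : K) : d⁄dX _ (expSeries ε) = (ε • varSeries K) * expSeries ε := by
  ext1 n
  rw [coeff_derivative, smul_mul_assoc, coeff_smul, coeff_mul]
  simp only [expSeries, varSeries, coeff_mk]
  rw [← succ_smul_expCoeff_succ, Algebra.smul_def, mul_comm]
  simp

theorem expSeries_mul_expSeries_neg (ε : K) : expSeries ε * expSeries (-ε) = 1 := by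
  apply eq_of_derivative_eq_mul (G := 0)
  · rw [Derivation.leibniz, derivative_expSeries, derivative_expSeries, neg_smul]
    simp only [smul_eq_mul]
    ring
  · simp
  · simp [expSeries, expCoeff]

theorem derivative_expSeries_mul_expSeries_neg (ε : K) :
    d⁄dX _ (expSeries ε) * expSeries (-ε) = ε • varSeries K := by
  rw [derivative_expSeries, mul_assoc, expSeries_mul_expSeries_neg, mul_one]

section Shift

variable {A : Type*} [CommRing A] [Algebra K A] {t : A}
  {φ ψ : MvPolynomial ℕ K →ₐ[K] A} {σ : K}

theorem derivative_map_expSeries (φ : MvPolynomial ℕ K →ₐ[K] A) (ε : K) :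
    d⁄dX A ((expSeries ε).map φ.toRingHom) =
      (ε • (varSeries K).map φ.toRingHom) * (expSeries ε).map φ.toRingHom := by
  rw [derivative_map, derivative_expSeries, map_mul]
  congr 1
  ext1 n
  simp

theorem map_expSeries_of_shift [IsAddTorsionFree A] {ε : K} (hε : ε * σ = -2)
    (h : ∀ i, φ (MvPolynomial.X i) = ψ (MvPolynomial.X i) + σ • t ^ (i + 1)) :
    (expSeries ε).map φ.toRingHom = (expSeries ε).map ψ.toRingHom * (1 - X * C t) ^ 2 := by
  refine eq_of_derivative_eq_mul (derivative_map_expSeries φ ε) ?_ ?_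
  · rw [map_varSeries_of_shift h, smul_add, smul_smul, hε, Derivation.leibniz,
      derivative_map_expSeries, sq, Derivation.leibniz, map_sub, Derivation.leibniz, derivative_X,
      derivative_C, Derivation.map_one_eq_zero]
    simp only [smul_eq_mul, Algebra.smul_def, map_ofNat, map_neg]
    linear_combination (2 * C t * (1 - X * C t) * (expSeries ε).map ψ.toRingHom) *
      geometric_mul_one_sub t
  · rw [coeff_mul, Finset.Nat.antidiagonal_zero, Finset.sum_singleton, coeff_zero_map_expSeries,
      coeff_zero_map_expSeries]
    simp

theorem map_expSeries_neg_of_shift [IsAddTorsionFree A] {ε : K} (hε : ε * σ = -2)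
    (h : ∀ i, φ (MvPolynomial.X i) = ψ (MvPolynomial.X i) + σ • t ^ (i + 1)) :
    (expSeries (-ε)).map φ.toRingHom = (expSeries (-ε)).map ψ.toRingHom * geometric t ^ 2 := by
  have inv := fun φ : MvPolynomial ℕ K →ₐ[K] A =>
    congrArg (PowerSeries.map φ.toRingHom) (expSeries_mul_expSeries_neg ε)
  simp only [map_mul, map_one] at inv
  have geometric_sq : geometric t ^ 2 * (1 - X * C t) ^ 2 = 1 := by
    rw [← mul_pow, geometric_mul_one_sub, one_pow]
  refine left_inv_eq_right_inv (a := (expSeries ε).map φ.toRingHom)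
    ((mul_comm _ _).trans (inv φ)) ?_
  rw [map_expSeries_of_shift hε h, mul_mul_mul_comm, inv ψ, one_mul, mul_comm, geometric_sq]

end Shift

end ExpCoeff

end Schur

/-! ## Vertex operators -/

section VertexOperators

open Finset.HasAntidiagonal (antidiagonal mem_antidiagonal)

open Finset (range mem_range)

variable {K : Type*} [Field K]

/-- `expCoeff`, extended by zero to negative indices. -/
noncomputable def expCoeffInt (ε : K) (k : ℤ) : MvPolynomial ℕ K :=
  if 0 ≤ k then expCoeff ε k.toNat else 0

theorem expCoeffInt_natCast (ε : K) (n : ℕ) : expCoeffInt ε n = expCoeff ε n := by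
  simp [expCoeffInt]

theorem expCoeffInt_of_neg (ε : K) {k : ℤ} (hk : k < 0) : expCoeffInt ε k = 0 :=
  if_neg hk.not_ge

theorem coeff_X_pow_mul_map_expSeries {A : Type*} [Semiring A] (φ : MvPolynomial ℕ K →+* A)
    (ε : K) (m n : ℕ) :
    PowerSeries.coeff n (PowerSeries.X ^ m * (expSeries ε).map φ) = φ (expCoeffInt ε (n - m)) := by
  rw [PowerSeries.coeff_X_pow_mul', PowerSeries.coeff_map, expSeries, PowerSeries.coeff_mk]
  split_ifs with h
  · rw [← Nat.cast_sub h, expCoeffInt_natCast]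
  · rw [expCoeffInt_of_neg ε (by omega), map_zero]

/-- The substitution `xᵢ ↦ xᵢ + σ tⁱ⁺¹`. -/
noncomputable def translate (σ : K) : MvPolynomial ℕ K →ₐ[K] Polynomial (MvPolynomial ℕ K) :=
  MvPolynomial.aeval fun i => Polynomial.C (MvPolynomial.X i) + σ • Polynomial.X ^ (i + 1)

theorem translate_X (σ : K) (i : ℕ) : translate σ (MvPolynomial.X i) =
    Polynomial.C (MvPolynomial.X i) + σ • Polynomial.X ^ (i + 1) :=
  MvPolynomial.aeval_X _ _

/-- The coefficient of `zᵏ` in `exp (ε ∑ xᵢ zⁱ⁺¹ / (i + 1)) P(z⁻¹)`, as a function of `P`. -/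
noncomputable def expMulCoeff (ε : K) (k : ℤ) :
    Polynomial (MvPolynomial ℕ K) →ₗ[MvPolynomial ℕ K] MvPolynomial ℕ K :=
  Polynomial.lsum fun j => LinearMap.toSpanSingleton _ _ (expCoeffInt ε (k + j))

theorem expMulCoeff_C_mul_X_pow (ε : K) (k : ℤ) (a : MvPolynomial ℕ K) (j : ℕ) :
    expMulCoeff ε k (Polynomial.C a * Polynomial.X ^ j) = a * expCoeffInt ε (k + j) := by
  rw [Polynomial.C_mul_X_pow_eq_monomial, expMulCoeff, Polynomial.lsum_apply,
    Polynomial.sum_monomial_index]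
  · rw [LinearMap.toSpanSingleton_apply, smul_eq_mul]
  · rw [map_zero]

theorem expMulCoeff_C (ε : K) (k : ℤ) (a : MvPolynomial ℕ K) :
    expMulCoeff ε k (Polynomial.C a) = a * expCoeffInt ε k := by
  simpa using expMulCoeff_C_mul_X_pow ε k a 0

theorem expMulCoeff_X_pow_mul (ε : K) (k : ℤ) (i : ℕ) (P : Polynomial (MvPolynomial ℕ K)) :
    expMulCoeff ε k (Polynomial.X ^ i * P) = expMulCoeff ε (k + i) P := by
  induction P using Polynomial.induction_on' with
  | add p q hp hq => rw [mul_add, map_add, map_add, hp, hq]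
  | monomial n a =>
    rw [← Polynomial.C_mul_X_pow_eq_monomial, expMulCoeff_C_mul_X_pow, mul_left_comm, ← pow_add,
      expMulCoeff_C_mul_X_pow, Nat.cast_add, add_assoc]

/-- The coefficient of `zᵏ` in the vertex operator
`P ↦ exp (ε ∑ xᵢ zⁱ⁺¹ / (i + 1)) P(xᵢ - 2ε z⁻⁽ⁱ⁺¹⁾)`. -/
noncomputable def vertexCoeff (ε : K) (k : ℤ) : MvPolynomial ℕ K →ₗ[K] MvPolynomial ℕ K :=
  (expMulCoeff ε k).restrictScalars K ∘ₗ (translate (-2 * ε)).toLinearMap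

theorem vertexCoeff_apply (ε : K) (k : ℤ) (P : MvPolynomial ℕ K) :
    vertexCoeff ε k P = expMulCoeff ε k (translate (-2 * ε) P) := rfl

theorem vertexCoeff_C (ε : K) (k : ℤ) (a : K) :
    vertexCoeff ε k (MvPolynomial.C a) = a • expCoeffInt ε k := by
  rw [MvPolynomial.C_eq_smul_one, map_smul, vertexCoeff_apply, map_one, ← Polynomial.C_1,
    expMulCoeff_C, one_mul]

theorem vertexCoeff_X_mul (ε : K) (k : ℤ) (i : ℕ) (P : MvPolynomial ℕ K) :
    vertexCoeff ε k (MvPolynomial.X i * P) =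
      MvPolynomial.X i * vertexCoeff ε k P + (-2 * ε) • vertexCoeff ε (k + i + 1) P := by
  simp only [vertexCoeff_apply]
  rw [map_mul, translate_X, add_mul, map_add, smul_mul_assoc, LinearMap.map_smul_of_tower,
    expMulCoeff_X_pow_mul, ← Polynomial.smul_eq_C_mul, map_smul, smul_eq_mul, Nat.cast_succ,
    add_assoc k]

theorem translate_X_eq_CAlgHom (σ : K) (i : ℕ) : translate σ (MvPolynomial.X i) =
    Polynomial.CAlgHom (R := K) (MvPolynomial.X i) + σ • Polynomial.X ^ (i + 1) :=
  translate_X σ i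

theorem sum_antidiagonal_mul_expCoeff (ε : K) (F : ℕ → MvPolynomial ℕ K) {M N : ℕ} (h : M < N) :
    ∑ q ∈ antidiagonal M, F q.1 * expCoeff ε q.2 =
      ∑ i ∈ range N, F i * expCoeffInt ε (M - i) := by
  rw [Finset.Nat.sum_antidiagonal_eq_sum_range_succ_mk,
    ← Finset.sum_subset (Finset.range_subset_range.2 h)]
  · refine Finset.sum_congr rfl fun i hi => ?_
    rw [← Nat.cast_sub (Nat.le_of_lt_succ (mem_range.1 hi)), expCoeffInt_natCast]
  · intro i _ hi
    rw [mem_range] at hi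
    rw [expCoeffInt_of_neg ε (by omega), mul_zero]

section CharZero

variable [CharZero K] {ε : K}

/-- The coefficient of `zˡ` in `E(z, x + σt) = E(z, x) (1 - tz)²`. -/
theorem translate_expCoeffInt (hε : ε * ε = 1) (l : ℤ) :
    translate (-2 * ε) (expCoeffInt ε l) = Polynomial.C (expCoeffInt ε l)
      - (2 : K) • (Polynomial.C (expCoeffInt ε (l - 1)) * Polynomial.X ^ 1)
      + Polynomial.C (expCoeffInt ε (l - 2)) * Polynomial.X ^ 2 := by
  obtain hl | hl := lt_or_ge l 0
  · simp [expCoeffInt_of_neg ε hl, expCoeffInt_of_neg ε (show l - 1 < 0 by omega),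
      expCoeffInt_of_neg ε (show l - 2 < 0 by omega)]
  obtain ⟨n, rfl⟩ := Int.eq_ofNat_of_zero_le hl
  have series := map_expSeries_of_shift (ε := ε) (by linear_combination (-2) * hε)
    (translate_X_eq_CAlgHom (-2 * ε))
  have expand (E : PowerSeries (Polynomial (MvPolynomial ℕ K))) :
      E * (1 - PowerSeries.X * PowerSeries.C Polynomial.X) ^ 2 = PowerSeries.X ^ 0 * E
        - PowerSeries.C (2 * Polynomial.X) * (PowerSeries.X ^ 1 * E)
        + PowerSeries.C (Polynomial.X ^ 2) * (PowerSeries.X ^ 2 * E) := by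
    simp only [map_mul, map_pow, map_ofNat]
    ring
  have coeffs := congrArg (PowerSeries.coeff n) (series.trans (expand _))
  rw [map_add, map_sub, PowerSeries.coeff_C_mul, PowerSeries.coeff_C_mul,
    coeff_X_pow_mul_map_expSeries, coeff_X_pow_mul_map_expSeries, coeff_X_pow_mul_map_expSeries,
    ← one_mul (PowerSeries.map _ _), ← pow_zero PowerSeries.X,
    coeff_X_pow_mul_map_expSeries] at coeffs
  simp only [AlgHom.toRingHom_eq_coe, RingHom.coe_coe, Polynomial.CAlgHom_apply, Nat.cast_zero,
    sub_zero, Nat.cast_one, Nat.cast_two] at coeffs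
  rw [coeffs, Algebra.smul_def, map_ofNat]
  ring

theorem vertexCoeff_expCoeffInt (hε : ε * ε = 1) (k l : ℤ) :
    vertexCoeff ε k (expCoeffInt ε l) = expCoeffInt ε l * expCoeffInt ε k
      - (2 : K) • (expCoeffInt ε (l - 1) * expCoeffInt ε (k + 1))
      + expCoeffInt ε (l - 2) * expCoeffInt ε (k + 2) := by
  rw [vertexCoeff_apply, translate_expCoeffInt hε, map_add, map_sub, LinearMap.map_smul_of_tower,
    expMulCoeff_C, expMulCoeff_C_mul_X_pow, expMulCoeff_C_mul_X_pow, Nat.cast_one, Nat.cast_two]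

theorem vertexCoeff_comm (hε : ε * ε = 1) (k l : ℤ) (P : MvPolynomial ℕ K) :
    vertexCoeff ε (k - 2) (vertexCoeff ε l P) = vertexCoeff ε (l - 2) (vertexCoeff ε k P) := by
  induction P using MvPolynomial.induction_on generalizing k l with
  | C a =>
    rw [vertexCoeff_C, vertexCoeff_C, map_smul, map_smul, vertexCoeff_expCoeffInt hε,
      vertexCoeff_expCoeffInt hε, sub_add_cancel, sub_add_cancel, show k - 2 + 1 = k - 1 by ring,
      show l - 2 + 1 = l - 1 by ring, mul_comm (expCoeffInt ε (l - 1))]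
    ring_nf
  | add p q hp hq => simp only [map_add, hp, hq]
  | mul_X p i hp =>
    rw [mul_comm]
    simp only [vertexCoeff_X_mul, map_add, map_smul]
    rw [hp k l, hp k (l + i + 1), show k - 2 + i + 1 = (k + i + 1) - 2 by ring, hp (k + i + 1) l,
      show l - 2 + i + 1 = (l + i + 1) - 2 by ring]
    module

theorem translate_expCoeff_neg (hε : ε * ε = 1) (n : ℕ) :
    translate (-2 * ε) (expCoeff (-ε) n) = ∑ q ∈ antidiagonal n,
      ((q.2 : K) + 1) • (Polynomial.C (expCoeff (-ε) q.1) * Polynomial.X ^ q.2) := by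
  have series := map_expSeries_neg_of_shift (ε := ε) (by linear_combination (-2) * hε)
    (translate_X_eq_CAlgHom (-2 * ε))
  have := congrArg (PowerSeries.coeff n) series
  simp only [PowerSeries.coeff_mul, PowerSeries.coeff_map, coeff_geometric_sq, expSeries,
    PowerSeries.coeff_mk, AlgHom.toRingHom_eq_coe, RingHom.coe_coe,
    Polynomial.CAlgHom_apply] at this
  rw [this]
  refine Finset.sum_congr rfl fun q _ => ?_
  rw [mul_left_comm, Algebra.smul_def]
  simp

theorem vertexCoeff_expCoeffInt_neg (hε : ε * ε = 1) (M : ℕ) (l : ℤ) :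
    vertexCoeff ε (M - l) (expCoeffInt (-ε) l) = ∑ q ∈ antidiagonal M,
      ((l + 1 - q.1).toNat : K) • (expCoeff (-ε) q.1 * expCoeff ε q.2) := by
  obtain hl | hl := lt_or_ge l 0
  · rw [expCoeffInt_of_neg _ hl, map_zero]
    refine (Finset.sum_eq_zero fun q _ => ?_).symm
    rw [show (l + 1 - (q.1 : ℤ)).toNat = 0 by omega, Nat.cast_zero, zero_smul]
  obtain ⟨n, rfl⟩ := Int.eq_ofNat_of_zero_le hl
  have left : vertexCoeff ε (M - n) (expCoeffInt (-ε) n) = ∑ i ∈ range (n + 1),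
      (((n : ℤ) + 1 - i).toNat : K) • expCoeff (-ε) i * expCoeffInt ε (M - i) := by
    rw [expCoeffInt_natCast, vertexCoeff_apply, translate_expCoeff_neg hε, map_sum,
      Finset.Nat.sum_antidiagonal_eq_sum_range_succ_mk]
    refine Finset.sum_congr rfl fun i hi => ?_
    rw [mem_range] at hi
    rw [LinearMap.map_smul_of_tower, expMulCoeff_C_mul_X_pow, smul_mul_assoc,
      show (M : ℤ) - n + (n - i : ℕ) = M - i by omega,
      show ((n : ℤ) + 1 - i).toNat = n - i + 1 by omega, Nat.cast_succ]
  simp only [← smul_mul_assoc]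
  rw [left, sum_antidiagonal_mul_expCoeff ε
    (fun i => (((n : ℤ) + 1 - i).toNat : K) • expCoeff (-ε) i) (show M < n + 1 + M by omega)]
  refine Finset.sum_subset (Finset.range_subset_range.2 (by omega)) fun i _ hi => ?_
  rw [mem_range] at hi
  rw [show ((n : ℤ) + 1 - i).toNat = 0 by omega, Nat.cast_zero, zero_smul, zero_mul]

theorem sum_antidiagonal_fst_smul_expCoeff (m : ℕ) :
    ∑ q ∈ antidiagonal (m + 1), (q.1 : K) • (expCoeff 1 q.1 * expCoeff (-1) q.2) =
      (MvPolynomial.X m : MvPolynomial ℕ K) := by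
  have coeffs := congrArg (PowerSeries.coeff m) (derivative_expSeries_mul_expSeries_neg (1 : K))
  rw [one_smul, PowerSeries.coeff_mul, varSeries, PowerSeries.coeff_mk] at coeffs
  rw [Finset.Nat.sum_antidiagonal_succ, Nat.cast_zero, zero_smul, zero_add, ← coeffs]
  refine Finset.sum_congr rfl fun q _ => ?_
  rw [PowerSeries.coeff_derivative, expSeries, expSeries, PowerSeries.coeff_mk,
    PowerSeries.coeff_mk, Algebra.smul_def, map_natCast, Nat.cast_succ]
  ring

theorem vertexCoeff_one_expCoeffInt_neg_one (m : ℕ) {k l : ℤ} (h : k + l = m) :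
    vertexCoeff (1 : K) (k + 1) (expCoeffInt (-1) l) =
      vertexCoeff (-1) (l + 2) (expCoeffInt 1 (k - 1)) + MvPolynomial.X m := by
  have pos := vertexCoeff_expCoeffInt_neg (ε := (1 : K)) (mul_one 1) (m + 1) l
  have neg := vertexCoeff_expCoeffInt_neg (ε := (-1 : K)) (by ring) (m + 1) (k - 1)
  rw [show ((m + 1 : ℕ) : ℤ) - l = k + 1 by omega] at pos
  rw [neg_neg, show ((m + 1 : ℕ) : ℤ) - (k - 1) = l + 2 by omega] at neg
  have inv := congrArg (PowerSeries.coeff (m + 1)) (expSeries_mul_expSeries_neg (1 : K))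
  simp only [PowerSeries.coeff_mul, expSeries, PowerSeries.coeff_mk, PowerSeries.coeff_one,
    m.add_one_ne_zero, if_false] at inv
  have X_eq : (MvPolynomial.X m : MvPolynomial ℕ K) = ∑ q ∈ antidiagonal (m + 1),
      ((q.1 : K) - k) • (expCoeff 1 q.1 * expCoeff (-1) q.2) := by
    simp only [sub_smul]
    rw [Finset.sum_sub_distrib, sum_antidiagonal_fst_smul_expCoeff, ← Finset.smul_sum, inv,
      smul_zero, sub_zero]
  rw [pos, neg, ← Finset.Nat.sum_antidiagonal_swap, X_eq, ← Finset.sum_add_distrib]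
  refine Finset.sum_congr rfl fun q hq => ?_
  rw [mem_antidiagonal] at hq
  have coeff_eq : ((l + 1 - (q.2 : ℤ)).toNat : ℤ) =
      ((k - 1 + 1 - (q.1 : ℤ)).toNat : ℤ) + (q.1 - k) := by omega
  rw [Prod.fst_swap, Prod.snd_swap, mul_comm (expCoeff (-1) q.2), ← add_smul]
  congr 1
  exact_mod_cast congrArg (Int.cast : ℤ → K) coeff_eq

theorem vertexCoeff_one_neg_one (m : ℕ) {k l : ℤ} (h : k + l = m) (P : MvPolynomial ℕ K) :
    vertexCoeff 1 (k + 1) (vertexCoeff (-1) l P) =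
      vertexCoeff (-1) (l + 2) (vertexCoeff 1 (k - 1) P) + MvPolynomial.X m * P := by
  induction P using MvPolynomial.induction_on generalizing m k l with
  | C a =>
    rw [vertexCoeff_C, vertexCoeff_C, map_smul, map_smul,
      vertexCoeff_one_expCoeffInt_neg_one m h, smul_add, MvPolynomial.C_eq_smul_one,
      mul_smul_comm, mul_one]
  | add p q hp hq => simp only [map_add, hp m h, hq m h, mul_add]; abel
  | mul_X p i hp =>
    rw [mul_comm p]
    simp only [vertexCoeff_X_mul, map_add, map_smul]
    rw [hp m h, show k + 1 + i + 1 = (k + i + 1) + 1 by ring,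
      hp (m + i + 1) (k := k + i + 1) (by push_cast; omega),
      hp (m + i + 1) (l := l + i + 1) (by push_cast; omega),
      show l + i + 1 + 2 = l + 2 + i + 1 by ring, show k + i + 1 - 1 = k - 1 + i + 1 by ring,
      mul_add, mul_left_comm (MvPolynomial.X m)]
    module

end CharZero

end VertexOperators

/-! ## The Fock space representation -/

section Fock

variable (K : Type*) [Field K]

/-- The lattice Fock space: the direct sum, over the charge `c : ℤ`, of copies of `K[x₀, x₁, …]`. -/
abbrev Fock : Type _ := ℤ →₀ MvPolynomial ℕ K

/-- The action of `e ⊗ tⁿ`: a vertex operator raising the charge. -/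
noncomputable def fockE (n : ℕ) : Module.End K (Fock K) :=
  Finsupp.lsum K fun c : ℤ => Finsupp.lsingle (c + 1) ∘ₗ vertexCoeff 1 (n - 2 * c - 1)

/-- The action of `f ⊗ tⁿ⁺¹`: a vertex operator lowering the charge. -/
noncomputable def fockF (n : ℕ) : Module.End K (Fock K) :=
  Finsupp.lsum K fun c : ℤ => Finsupp.lsingle (c - 1) ∘ₗ vertexCoeff (-1) (n + 2 * c)

/-- The action of `h ⊗ tⁿ⁺¹`: multiplication by `xₙ`. -/
noncomputable def fockH (n : ℕ) : Module.End K (Fock K) :=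
  Finsupp.lsum K fun c : ℤ => Finsupp.lsingle c ∘ₗ LinearMap.mulLeft K (MvPolynomial.X n)

variable {K}

theorem fockE_single (n : ℕ) (c : ℤ) (P : MvPolynomial ℕ K) : fockE K n (Finsupp.single c P) =
    Finsupp.single (c + 1) (vertexCoeff 1 (n - 2 * c - 1) P) := by
  simp [fockE]

theorem fockF_single (n : ℕ) (c : ℤ) (P : MvPolynomial ℕ K) : fockF K n (Finsupp.single c P) =
    Finsupp.single (c - 1) (vertexCoeff (-1) (n + 2 * c) P) := by
  simp [fockF]

theorem fockH_single (n : ℕ) (c : ℤ) (P : MvPolynomial ℕ K) :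
    fockH K n (Finsupp.single c P) = Finsupp.single c (MvPolynomial.X n * P) := by
  simp [fockH]

theorem X_mul_vertexCoeff (ε : K) (k : ℤ) (i : ℕ) (P : MvPolynomial ℕ K) :
    MvPolynomial.X i * vertexCoeff ε k P = vertexCoeff ε k (MvPolynomial.X i * P) +
      (2 * ε) • vertexCoeff ε (k + i + 1) P := by
  rw [vertexCoeff_X_mul, neg_mul, neg_smul, neg_add_cancel_right]

section CharZero

variable [CharZero K]

theorem lie_fockE_fockE (m n : ℕ) : ⁅fockE K m, fockE K n⁆ = 0 :=
  lie_eq_of_apply_single fun c P => by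
    have shift (n : ℕ) : (n : ℤ) - 2 * (c + 1) - 1 = n - 2 * c - 1 - 2 := by ring
    rw [fockE_single, fockE_single, fockE_single, fockE_single, shift, shift,
      vertexCoeff_comm (mul_one 1), LinearMap.zero_apply, add_zero]

theorem lie_fockF_fockF (m n : ℕ) : ⁅fockF K m, fockF K n⁆ = 0 :=
  lie_eq_of_apply_single fun c P => by
    have shift (n : ℕ) : (n : ℤ) + 2 * (c - 1) = n + 2 * c - 2 := by ring
    rw [fockF_single, fockF_single, fockF_single, fockF_single, shift, shift,
      vertexCoeff_comm (by ring), LinearMap.zero_apply, add_zero]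

theorem lie_fockE_fockF (m n : ℕ) : ⁅fockE K m, fockF K n⁆ = fockH K (m + n) :=
  lie_eq_of_apply_single fun c P => by
    rw [fockE_single, fockF_single, fockF_single, fockE_single, fockH_single,
      show (m : ℤ) - 2 * (c - 1) - 1 = m - 2 * c + 1 by ring,
      vertexCoeff_one_neg_one (m + n) (by push_cast; ring), sub_add_cancel, add_sub_cancel_right,
      Finsupp.single_add, show (n : ℤ) + 2 * (c + 1) = n + 2 * c + 2 by ring]

end CharZero

theorem lie_fockH_fockH (m n : ℕ) : ⁅fockH K m, fockH K n⁆ = 0 :=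
  lie_eq_of_apply_single fun c P => by
    simp only [fockH_single, mul_left_comm, LinearMap.zero_apply, add_zero]

theorem lie_fockH_fockE (m n : ℕ) : ⁅fockH K m, fockE K n⁆ = (2 : K) • fockE K (m + n + 1) :=
  lie_eq_of_apply_single fun c P => by
    rw [fockE_single, fockH_single, fockH_single, LinearMap.smul_apply, fockE_single,
      fockE_single, X_mul_vertexCoeff, mul_one, Finsupp.single_add, Finsupp.smul_single,
      show ((m + n + 1 : ℕ) : ℤ) - 2 * c - 1 = n - 2 * c - 1 + m + 1 by push_cast; ring]

theorem lie_fockH_fockF (m n : ℕ) : ⁅fockH K m, fockF K n⁆ = -((2 : K) • fockF K (m + n + 1)) :=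
  lie_eq_of_apply_single fun c P => by
    rw [fockF_single, fockH_single, fockH_single, LinearMap.neg_apply, LinearMap.smul_apply,
      fockF_single, fockF_single, X_mul_vertexCoeff, mul_neg_one, neg_smul, Finsupp.single_add,
      Finsupp.single_neg, Finsupp.smul_single,
      show ((m + n + 1 : ℕ) : ℤ) + 2 * c = n + 2 * c + m + 1 by push_cast; ring]

theorem list_prod_fockH_single (l : List ℕ) (c : ℤ) (P : MvPolynomial ℕ K) :
    (l.map (fockH K)).prod (Finsupp.single c P) =
      Finsupp.single c ((l.map MvPolynomial.X).prod * P) := by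
  induction l with
  | nil => simp
  | cons i l ih =>
    rw [List.map_cons, List.prod_cons, Module.End.mul_apply, ih, fockH_single, List.map_cons,
      List.prod_cons, mul_assoc]

theorem multiset_prod_X (s : Multiset ℕ) : (s.map (MvPolynomial.X (R := K))).prod =
    MvPolynomial.monomial (Multiset.toFinsupp s) 1 := by
  induction s using Multiset.induction_on with
  | empty => simp
  | cons a s ih =>
    rw [Multiset.map_cons, Multiset.prod_cons, ih, MvPolynomial.X, MvPolynomial.monomial_mul,
      one_mul, ← Multiset.singleton_add, map_add, Multiset.toFinsupp_singleton]

theorem linearIndependent_multiset_prod_X :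
    LinearIndependent K fun s : Multiset ℕ => (s.map (MvPolynomial.X (R := K))).prod := by
  simp only [multiset_prod_X]
  have := (MvPolynomial.basisMonomials ℕ K).linearIndependent.comp
    (Multiset.toFinsupp (α := ℕ)) Multiset.toFinsupp.injective
  rwa [MvPolynomial.coe_basisMonomials] at this

theorem vertexCoeff_one (ε : K) (k : ℤ) : vertexCoeff ε k 1 = expCoeffInt ε k := by
  rw [← MvPolynomial.C_1, vertexCoeff_C, one_smul]

theorem vertexCoeff_zero_one (ε : K) {k : ℤ} (hk : k = 0) : vertexCoeff ε k 1 = 1 := by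
  rw [vertexCoeff_one, hk, ← Nat.cast_zero, expCoeffInt_natCast, expCoeff]

variable (K)

/-- The vacuum vector `1` in charge `0`. -/
noncomputable def vacuum : Fock K := Finsupp.single 0 1

theorem extremalChain_fockE (r : ℕ) :
    extremalChain (fun n => fockE K (n + 1)) (vacuum K) r = Finsupp.single (r : ℤ) 1 := by
  induction r with
  | zero => rfl
  | succ r ih =>
    rw [extremalChain, ih, fockE_single, vertexCoeff_zero_one _ (by push_cast; ring),
      Nat.cast_succ]

theorem extremalChain_fockF (r : ℕ) :
    extremalChain (fockF K) (vacuum K) r = Finsupp.single (-(r : ℤ)) 1 := by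
  induction r with
  | zero => rfl
  | succ r ih =>
    rw [extremalChain, ih, fockF_single, vertexCoeff_zero_one _ (by push_cast; ring),
      Nat.cast_succ, neg_add']

variable [CharZero K]

/-- The basic representation of the positive part of affine `sl₂` in the homogeneous
(Frenkel–Kac) vertex operator realization. -/
noncomputable def fockTriple : LoopTriple K (Module.End K (Fock K)) where
  e := fockE K
  f := fockF K
  h := fockH K
  lie_e_e := lie_fockE_fockE
  lie_f_f := lie_fockF_fockF
  lie_h_h := lie_fockH_fockH
  lie_e_f := lie_fockE_fockF
  lie_h_e := lie_fockH_fockE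
  lie_h_f := lie_fockH_fockF

theorem isVacuum_vacuum : (fockTriple K).IsVacuum (vacuum K) where
  e_zero := by
    change fockE K 0 (Finsupp.single 0 1) = 0
    rw [fockE_single, vertexCoeff_one, expCoeffInt_of_neg _ (by norm_num), Finsupp.single_zero]
  f_zero_f_zero := by
    change fockF K 0 (fockF K 0 (Finsupp.single 0 1)) = 0
    rw [fockF_single, vertexCoeff_zero_one _ (by norm_num), fockF_single, vertexCoeff_one,
      expCoeffInt_of_neg _ (by norm_num), Finsupp.single_zero]

theorem extremal_fockTriple (c : ℤ) :
    (fockTriple K).extremal (vacuum K) c = Finsupp.single c 1 := by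
  obtain ⟨r, rfl | rfl⟩ := c.eq_nat_or_neg
  · rw [LoopTriple.extremal_natCast]
    exact extremalChain_fockE K r
  · rw [LoopTriple.extremal_neg_natCast]
    exact extremalChain_fockF K r

theorem linearIndependent_fockTriple_h_extremal (c : ℤ) :
    LinearIndependent K fun s : Multiset ℕ =>
      (s.toList.map (fockTriple K).h).prod ((fockTriple K).extremal (vacuum K) c) := by
  have word (s : Multiset ℕ) :
      (s.toList.map (fockTriple K).h).prod ((fockTriple K).extremal (vacuum K) c) =
        Finsupp.lsingle (R := K) c (s.map (MvPolynomial.X (R := K))).prod := by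
    rw [extremal_fockTriple]
    refine (list_prod_fockH_single _ _ _).trans ?_
    rw [mul_one, ← Multiset.prod_coe, ← Multiset.map_coe, Multiset.coe_toList,
      Finsupp.lsingle_apply]
  simp only [word]
  exact linearIndependent_multiset_prod_X.map' (Finsupp.lsingle c)
    (LinearMap.ker_eq_bot.2 (Finsupp.single_injective c))

end Fock

/-! ## Chevalley generators and the Verma module -/

/-- The conditions on a generalized Cartan matrix. -/
structure IsGeneralizedCartan {ι : Type*} (A : Matrix ι ι ℤ) : Prop where
  diag : ∀ i, A i i = 2
  nonpos : ∀ i j, i ≠ j → A i j ≤ 0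
  eq_zero_symm : ∀ i j, A i j = 0 → A j i = 0

/-- Elements `e i`, `f i`, `h i` of a Lie algebra satisfying the relations of the Chevalley
generators of `g(A)`, apart from the Serre relations. -/
structure ChevalleyTriple (K : Type*) {ι : Type*} [CommRing K] [DecidableEq ι] (A : Matrix ι ι ℤ)
    (L : Type*) [LieRing L] [LieAlgebra K L] where
  e : ι → L
  f : ι → L
  h : ι → L
  lie_h_h : ∀ i j, ⁅h i, h j⁆ = 0
  lie_e_f : ∀ i j, ⁅e i, f j⁆ = if i = j then h i else 0
  lie_h_e : ∀ i j, ⁅h i, e j⁆ = (A i j : K) • e j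
  lie_h_f : ∀ i j, ⁅h i, f j⁆ = -((A i j : K) • f j)

section SerreElement

variable (K : Type*) {ι L : Type*} [CommRing K] [LieRing L] [LieAlgebra K L]

/-- The element `(ad e_i)^(1 - A i j) e_j`, which the Serre relations require to vanish. -/
noncomputable def serreElement (A : Matrix ι ι ℤ) (e : ι → L) (i j : ι) : L :=
  (ad K L (e i) ^ (1 - A i j).toNat) (e j)

theorem ad_pow_succ_apply (x y : L) (n : ℕ) :
    (ad K L x ^ (n + 1)) y = ⁅x, (ad K L x ^ n) y⁆ := by
  rw [pow_succ', Module.End.mul_apply, ad_apply]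

end SerreElement

namespace ChevalleyTriple

variable {K ι L : Type*} [CommRing K] [DecidableEq ι] {A : Matrix ι ι ℤ}
  [LieRing L] [LieAlgebra K L] (C : ChevalleyTriple K A L)

/-- The Chevalley involution: exchange the `e i` with the `f i` and negate the `h i`. -/
def swap : ChevalleyTriple K A L where
  e := C.f
  f := C.e
  h i := -C.h i
  lie_h_h i j := by rw [neg_lie, lie_neg, C.lie_h_h, neg_zero, neg_zero]
  lie_e_f i j := by
    rw [← lie_skew, C.lie_e_f]
    simp only [eq_comm (a := j)]
    split_ifs with h
    · rw [h]
    · exact neg_zero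
  lie_h_e i j := by rw [neg_lie, C.lie_h_f, neg_neg]
  lie_h_f i j := by rw [neg_lie, C.lie_h_e]

theorem lie_f_e (i j : ι) : ⁅C.f i, C.e j⁆ = if i = j then -C.h i else 0 :=
  C.swap.lie_e_f i j

theorem lie_h_ad_pow (k i j : ι) (n : ℕ) : ⁅C.h k, (ad K L (C.e i) ^ n) (C.e j)⁆ =
    ((n : K) * A k i + A k j) • (ad K L (C.e i) ^ n) (C.e j) := by
  induction n with
  | zero =>
    rw [pow_zero, Module.End.one_apply, C.lie_h_e, Nat.cast_zero, zero_mul, zero_add]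
  | succ n ih =>
    rw [ad_pow_succ_apply, leibniz_lie, C.lie_h_e, ih, lie_smul, smul_lie, ← add_smul]
    congr 1
    push_cast
    ring

theorem lie_f_ad_pow_self {i j : ι} (hi : A i i = 2) (hij : i ≠ j) (n : ℕ) :
    ⁅C.f i, (ad K L (C.e i) ^ (n + 1)) (C.e j)⁆ =
      (-((n + 1) * (A i j + n)) : K) • (ad K L (C.e i) ^ n) (C.e j) := by
  induction n with
  | zero =>
    rw [zero_add, pow_one, pow_zero, ad_apply, leibniz_lie, C.lie_f_e, C.lie_f_e, if_pos rfl,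
      if_neg hij, lie_zero, neg_lie, C.lie_h_e, Module.End.one_apply]
    push_cast
    module
  | succ n ih =>
    rw [ad_pow_succ_apply, leibniz_lie, C.lie_f_e, if_pos rfl, ih, neg_lie, lie_h_ad_pow,
      lie_smul, ← ad_pow_succ_apply, hi]
    push_cast
    module

theorem lie_f_ad_pow_of_ne {i k : ι} (hki : k ≠ i) (y : L) (n : ℕ) :
    ⁅C.f k, (ad K L (C.e i) ^ n) y⁆ = (ad K L (C.e i) ^ n) ⁅C.f k, y⁆ := by
  induction n with
  | zero => rfl
  | succ n ih =>
    rw [ad_pow_succ_apply, ad_pow_succ_apply, leibniz_lie, C.lie_f_e, if_neg hki, zero_lie,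
      zero_add, ih]

theorem ad_pow_h_eq_zero (hA : IsGeneralizedCartan A) {i j : ι} (hij : i ≠ j) :
    (ad K L (C.e i) ^ (1 - A i j).toNat) (C.h j) = 0 := by
  have bracket : ⁅C.e i, C.h j⁆ = -((A j i : K) • C.e i) := by rw [← lie_skew, C.lie_h_e]
  have nonpos := hA.nonpos i j hij
  obtain hzero | hneg := nonpos.eq_or_lt
  · rw [hzero, sub_zero, Int.toNat_one, pow_one, ad_apply, bracket, hA.eq_zero_symm i j hzero,
      Int.cast_zero, zero_smul, neg_zero]
  · obtain ⟨n, hn⟩ : ∃ n, (1 - A i j).toNat = n + 2 := ⟨(-A i j - 1).toNat, by omega⟩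
    rw [hn, pow_add, sq, Module.End.mul_apply, Module.End.mul_apply, ad_apply, ad_apply, bracket,
      lie_neg, lie_smul, lie_self, smul_zero, neg_zero, map_zero]

theorem lie_f_serreElement (hA : IsGeneralizedCartan A) {i j : ι} (hij : i ≠ j) (k : ι) :
    ⁅C.f k, serreElement K A C.e i j⁆ = 0 := by
  rw [serreElement]
  obtain rfl | hki := eq_or_ne k i
  · have nonpos := hA.nonpos k j hij
    obtain ⟨n, hn⟩ : ∃ n : ℕ, A k j = -n := ⟨(-A k j).toNat, by omega⟩
    rw [hn, show (1 - -(n : ℤ)).toNat = n + 1 by omega, C.lie_f_ad_pow_self (hA.diag k) hij, hn]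
    push_cast
    rw [neg_add_cancel, mul_zero, neg_zero, zero_smul]
  · rw [C.lie_f_ad_pow_of_ne hki, C.lie_f_e]
    split_ifs with hkj
    · rw [map_neg, hkj, C.ad_pow_h_eq_zero hA hij, neg_zero]
    · exact map_zero _

end ChevalleyTriple

section Verma

variable (K : Type*) {ι : Type*} [CommRing K]

/-- The Verma module of highest weight `0`, up to the exchange of `e` and `f`: its basis vector at
the word `[i₁, …, iₙ]` stands for `e i₁ ⋯ e iₙ` applied to a vector killed by all `f i`, `h i`. -/
abbrev Verma (ι : Type*) : Type _ := List ι →₀ K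

/-- The action of `e i` on the Verma module. -/
noncomputable def vermaE (i : ι) : Module.End K (Verma K ι) := Finsupp.lmapDomain K K (List.cons i)

variable (A : Matrix ι ι ℤ)

/-- The eigenvalue of `h k` on the basis vector of the Verma module at the word `w`. -/
def wordWeight (k : ι) (w : List ι) : ℤ := (w.map fun j => A k j).sum

/-- The action of `h k` on the Verma module. -/
noncomputable def vermaH (k : ι) : Module.End K (Verma K ι) :=
  Finsupp.lsum K fun w => (wordWeight A k w : K) • Finsupp.lsingle w

section Actions

variable {K}

theorem vermaE_single (i : ι) (w : List ι) (t : K) :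
    vermaE K i (Finsupp.single w t) = Finsupp.single (i :: w) t :=
  Finsupp.mapDomain_single

theorem vermaH_single (k : ι) (w : List ι) (t : K) :
    vermaH K A k (Finsupp.single w t) = (wordWeight A k w : K) • Finsupp.single w t := by
  simp [vermaH]

theorem wordWeight_cons (k i : ι) (w : List ι) :
    wordWeight A k (i :: w) = A k i + wordWeight A k w := by
  rw [wordWeight, List.map_cons, List.sum_cons, wordWeight]

theorem lie_vermaH_vermaE (k i : ι) : ⁅vermaH K A k, vermaE K i⁆ = (A k i : K) • vermaE K i :=
  lie_eq_of_apply_single fun w t => by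
    rw [LinearMap.smul_apply, vermaE_single, vermaH_single, vermaH_single, map_smul,
      vermaE_single, wordWeight_cons]
    push_cast
    module

end Actions

variable [DecidableEq ι]

/-- The action of `f k` on the basis vectors of the Verma module, obtained by commuting `f k`
past each letter. -/
noncomputable def vermaFWord (k : ι) : List ι → Verma K ι
  | [] => 0
  | i :: w => vermaE K i (vermaFWord k w) -
      if i = k then (wordWeight A k w : K) • Finsupp.single w 1 else 0

/-- The action of `f k` on the Verma module. -/
noncomputable def vermaF (k : ι) : Module.End K (Verma K ι) :=
  Finsupp.linearCombination K (vermaFWord K A k)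

theorem vermaF_single (k : ι) (w : List ι) (t : K) :
    vermaF K A k (Finsupp.single w t) = t • vermaFWord K A k w :=
  Finsupp.linearCombination_single K t w

theorem vermaH_vermaFWord (k i : ι) (w : List ι) : vermaH K A k (vermaFWord K A i w) =
    ((wordWeight A k w : K) - A k i) • vermaFWord K A i w := by
  induction w with
  | nil => rw [vermaFWord, map_zero, smul_zero]
  | cons j w ih =>
    rw [vermaFWord, map_sub,
      apply_apply_of_lie_eq (lie_vermaH_vermaE A k j), ih, map_smul, LinearMap.smul_apply,
      wordWeight_cons]
    push_cast
    split_ifs with hji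
    · rw [map_smul, vermaH_single, hji]
      module
    · rw [map_zero]
      module

/-- The Verma module as a representation of the Chevalley generators. -/
noncomputable def vermaTriple : ChevalleyTriple K A (Module.End K (Verma K ι)) where
  e := vermaE K
  f := vermaF K A
  h := vermaH K A
  lie_h_h i j := lie_eq_of_apply_single fun w t => by
    rw [vermaH_single, vermaH_single, map_smul, map_smul, vermaH_single, vermaH_single,
      smul_comm, LinearMap.zero_apply, add_zero]
  lie_e_f i j := lie_eq_of_apply_single fun w t => by
    rw [vermaE_single, vermaF_single, vermaF_single, vermaFWord, map_smul, smul_sub]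
    split_ifs with hij
    · rw [vermaH_single, hij, smul_comm, Finsupp.smul_single_one, sub_add_cancel]
    · rw [smul_zero, sub_zero, LinearMap.zero_apply, add_zero]
  lie_h_e := lie_vermaH_vermaE A
  lie_h_f i j := lie_eq_of_apply_single fun w t => by
    rw [LinearMap.neg_apply, LinearMap.smul_apply, vermaH_single, map_smul, vermaF_single,
      map_smul, vermaH_vermaFWord]
    module

end Verma

/-! ## The Serre quotient of the Verma module -/

section Semiconj

variable {K M N : Type*} [CommRing K] [AddCommGroup M] [Module K M] [AddCommGroup N] [Module K N]
  {φ : M →ₗ[K] N} {a a' : Module.End K M} {b b' : Module.End K N}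

theorem semiconj_lie (h : Function.Semiconj φ a b) (h' : Function.Semiconj φ a' b') :
    Function.Semiconj φ ⇑⁅a, a'⁆ ⇑⁅b, b'⁆ := fun u => by
  rw [Ring.lie_def, Ring.lie_def, LinearMap.sub_apply, LinearMap.sub_apply, map_sub,
    Module.End.mul_apply, Module.End.mul_apply, Module.End.mul_apply, Module.End.mul_apply,
    h, h', h', h]

theorem semiconj_smul (t : K) (h : Function.Semiconj φ a b) :
    Function.Semiconj φ ⇑(t • a) ⇑(t • b) := fun u => by
  rw [LinearMap.smul_apply, LinearMap.smul_apply, map_smul, h]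

theorem semiconj_ad_pow (h : Function.Semiconj φ a b) (h' : Function.Semiconj φ a' b') (n : ℕ) :
    Function.Semiconj φ ⇑((ad K (Module.End K M) a ^ n) a')
      ⇑((ad K (Module.End K N) b ^ n) b') := by
  induction n with
  | zero => exact h'
  | succ n ih =>
    rw [ad_pow_succ_apply, ad_pow_succ_apply]
    exact semiconj_lie h ih

theorem semiconj_serreElement {ι : Type*} (A : Matrix ι ι ℤ) {e : ι → Module.End K M}
    {e' : ι → Module.End K N} (h : ∀ i, Function.Semiconj φ (e i) (e' i)) (i j : ι) :
    Function.Semiconj φ ⇑(serreElement K A e i j) ⇑(serreElement K A e' i j) :=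
  semiconj_ad_pow (h i) (h j) _

theorem eq_of_semiconj (hφ : Function.Surjective φ) (h : Function.Semiconj φ a b)
    (h' : Function.Semiconj φ a b') : b = b' :=
  LinearMap.ext <| hφ.forall.2 fun u => (h u).symm.trans (h' u)

/-- Chevalley triples descend along a surjective intertwining map. -/
def ChevalleyTriple.ofSemiconj {ι : Type*} [DecidableEq ι] {A : Matrix ι ι ℤ}
    (C : ChevalleyTriple K A (Module.End K M)) (hφ : Function.Surjective φ)
    (e f h : ι → Module.End K N) (he : ∀ i, Function.Semiconj φ (C.e i) (e i))
    (hf : ∀ i, Function.Semiconj φ (C.f i) (f i)) (hh : ∀ i, Function.Semiconj φ (C.h i) (h i)) :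
    ChevalleyTriple K A (Module.End K N) where
  e := e
  f := f
  h := h
  lie_h_h i j := eq_of_semiconj hφ (semiconj_lie (hh i) (hh j)) fun u => by
    rw [C.lie_h_h, LinearMap.zero_apply, LinearMap.zero_apply, map_zero]
  lie_e_f i j := eq_of_semiconj hφ (semiconj_lie (he i) (hf j)) fun u => by
    rw [C.lie_e_f]
    split_ifs
    · exact hh i u
    · exact map_zero φ
  lie_h_e i j := eq_of_semiconj hφ (semiconj_lie (hh i) (he j)) <| by
    rw [C.lie_h_e]
    exact semiconj_smul _ (he j)
  lie_h_f i j := eq_of_semiconj hφ (semiconj_lie (hh i) (hf j)) <| by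
    rw [C.lie_h_f, ← neg_smul, ← neg_smul]
    exact semiconj_smul _ (hf j)

end Semiconj

/-- The Serre relations for the elements `e i`. -/
def SatisfiesSerre (K : Type*) {ι L : Type*} [CommRing K] [LieRing L] [LieAlgebra K L]
    (A : Matrix ι ι ℤ) (e : ι → L) : Prop :=
  ∀ i j, i ≠ j → serreElement K A e i j = 0

section SerreSubmodule

variable {K ι : Type*} [CommRing K]

theorem ad_pow_apply_eq_zero {M : Type*} [AddCommGroup M] [Module K M] {a b : Module.End K M}
    {v : M} (ha : a v = 0) (hb : b v = 0) (n : ℕ) : (ad K _ a ^ n) b v = 0 := by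
  induction n with
  | zero => exact hb
  | succ n ih =>
    rw [ad_pow_succ_apply, Ring.lie_def, LinearMap.sub_apply, Module.End.mul_apply, ih,
      Module.End.mul_apply, ha, map_zero, map_zero, sub_zero]

theorem eq_zero_of_lie_vermaE {a : Module.End K (Verma K ι)}
    (hE : ∀ k : ι, ⁅vermaE K k, a⁆ = 0) (hvac : a (Finsupp.single [] 1) = 0) : a = 0 := by
  refine Finsupp.lhom_ext' fun w => LinearMap.ext_ring ?_
  change a (Finsupp.single w 1) = 0
  induction w with
  | nil => exact hvac
  | cons k w ih =>
    have commute := apply_apply_of_lie_eq (hE k) (Finsupp.single w 1)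
    rwa [ih, map_zero, vermaE_single, LinearMap.zero_apply, add_zero, eq_comm] at commute

section

variable [DecidableEq ι]

theorem satisfiesSerre_vermaF {A : Matrix ι ι ℤ} (hA : IsGeneralizedCartan A) :
    SatisfiesSerre K A (vermaF K A) := fun i j hij =>
  have vac (k : ι) : vermaF K A k (Finsupp.single [] 1) = 0 := by
    rw [vermaF_single, one_smul, vermaFWord]
  eq_zero_of_lie_vermaE (fun k => (vermaTriple K A).swap.lie_f_serreElement hA hij k)
    (ad_pow_apply_eq_zero (vac i) (vac j) _)

end

variable (K)

/-- The smallest submodule of the Verma module that is stable under all `e i` and contains the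
images of all Serre elements in the `e i`. -/
noncomputable def serreSubmodule (A : Matrix ι ι ℤ) : Submodule K (Verma K ι) :=
  sInf {S | (∀ i j, i ≠ j → ∀ u, serreElement K A (vermaE K) i j u ∈ S) ∧
    ∀ k, S ≤ S.comap (vermaE K k)}

variable {K} {A : Matrix ι ι ℤ}

theorem serreSubmodule_le {S : Submodule K (Verma K ι)}
    (hserre : ∀ i j, i ≠ j → ∀ u, serreElement K A (vermaE K) i j u ∈ S)
    (hE : ∀ k, S ≤ S.comap (vermaE K k)) : serreSubmodule K A ≤ S :=
  sInf_le ⟨hserre, hE⟩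

theorem serreElement_mem_serreSubmodule {i j : ι} (hij : i ≠ j) (u : Verma K ι) :
    serreElement K A (vermaE K) i j u ∈ serreSubmodule K A :=
  Submodule.mem_sInf.2 fun _ hS => hS.1 i j hij u

theorem serreSubmodule_le_comap_vermaE (k : ι) :
    serreSubmodule K A ≤ (serreSubmodule K A).comap (vermaE K k) := fun _ hx =>
  Submodule.mem_sInf.2 fun _ hS => hS.2 k (Submodule.mem_sInf.1 hx _ hS)

theorem serreSubmodule_le_comap {D : Module.End K (Verma K ι)}
    (hserre : ∀ i j, i ≠ j → ∀ u, ⁅D, serreElement K A (vermaE K) i j⁆ u ∈ serreSubmodule K A)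
    (hE : ∀ k : ι, ∀ x ∈ serreSubmodule K A, ⁅vermaE K k, D⁆ x ∈ serreSubmodule K A) :
    serreSubmodule K A ≤ (serreSubmodule K A).comap D := by
  refine le_inf_iff.1 (serreSubmodule_le (S := serreSubmodule K A ⊓ (serreSubmodule K A).comap D)
    (fun i j hij u => ⟨serreElement_mem_serreSubmodule hij u, ?_⟩)
    fun k x hx => ⟨serreSubmodule_le_comap_vermaE k hx.1, ?_⟩) |>.2
  · rw [SetLike.mem_coe, Submodule.mem_comap, apply_apply_of_lie_eq rfl]
    exact add_mem (serreElement_mem_serreSubmodule hij _) (hserre i j hij u)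
  · rw [SetLike.mem_coe, Submodule.mem_comap,
      ← sub_eq_iff_eq_add.2 (apply_apply_of_lie_eq (a := vermaE K k) rfl x)]
    exact sub_mem (serreSubmodule_le_comap_vermaE k hx.2) (hE k x hx.1)

theorem serreSubmodule_le_comap_vermaH (k : ι) :
    serreSubmodule K A ≤ (serreSubmodule K A).comap (vermaH K A k) := by
  classical
  refine serreSubmodule_le_comap (fun i j hij u => ?_) fun i x hx => ?_
  · rw [show ⁅vermaH K A k, serreElement K A (vermaE K) i j⁆ = _ from
      (vermaTriple K A).lie_h_ad_pow k i j _]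
    exact Submodule.smul_mem _ _ (serreElement_mem_serreSubmodule hij u)
  · rw [← lie_skew, lie_vermaH_vermaE]
    exact neg_mem (Submodule.smul_mem _ _ (serreSubmodule_le_comap_vermaE i hx))

variable [DecidableEq ι]

theorem serreSubmodule_le_comap_vermaF (hA : IsGeneralizedCartan A) (k : ι) :
    serreSubmodule K A ≤ (serreSubmodule K A).comap (vermaF K A k) := by
  refine serreSubmodule_le_comap (fun i j hij u => ?_) fun i x hx => ?_
  · rw [show ⁅vermaF K A k, serreElement K A (vermaE K) i j⁆ = _ from
      (vermaTriple K A).lie_f_serreElement hA hij k]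
    exact zero_mem _
  · rw [show ⁅vermaE K i, vermaF K A k⁆ = _ from (vermaTriple K A).lie_e_f i k]
    split_ifs
    · exact serreSubmodule_le_comap_vermaH i hx
    · exact zero_mem _

variable (K) in
/-- The quotient of the Verma module by the Serre submodule, a copy of `U(𝔫⁺)`, as a
representation of the Chevalley generators. -/
noncomputable def serreTriple (hA : IsGeneralizedCartan A) :
    ChevalleyTriple K A (Module.End K (Verma K ι ⧸ serreSubmodule K A)) :=
  (vermaTriple K A).ofSemiconj (φ := (serreSubmodule K A).mkQ) (Submodule.mkQ_surjective _)
    (fun k => Submodule.mapQ _ _ (vermaE K k) (serreSubmodule_le_comap_vermaE k))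
    (fun k => Submodule.mapQ _ _ (vermaF K A k) (serreSubmodule_le_comap_vermaF hA k))
    (fun k => Submodule.mapQ _ _ (vermaH K A k) (serreSubmodule_le_comap_vermaH k))
    (fun _ _ => rfl) (fun _ _ => rfl) fun _ _ => rfl

theorem satisfiesSerre_serreTriple_e (hA : IsGeneralizedCartan A) :
    SatisfiesSerre K A (serreTriple K hA).e := fun i j hij =>
  eq_of_semiconj (Submodule.mkQ_surjective _)
    (semiconj_serreElement A (e := vermaE K) (fun _ _ => rfl) i j) fun u =>
      (Submodule.Quotient.mk_eq_zero _).2 (serreElement_mem_serreSubmodule hij u)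

theorem satisfiesSerre_serreTriple_f (hA : IsGeneralizedCartan A) :
    SatisfiesSerre K A (serreTriple K hA).f := fun i j hij =>
  eq_of_semiconj (Submodule.mkQ_surjective _)
    (semiconj_serreElement A (e := vermaF K A) (fun _ _ => rfl) i j) <| by
      rw [satisfiesSerre_vermaF hA i j hij]
      exact fun _ => map_zero _

end SerreSubmodule

section Intertwiner

variable {K ι N : Type*} [CommRing K] [AddCommGroup N] [Module K N]

/-- The intertwining map from the Verma module that sends the vacuum to `v` and carries `e i` to
`b i`. -/
noncomputable def vermaIntertwiner (b : ι → Module.End K N) (v : N) : Verma K ι →ₗ[K] N :=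
  Finsupp.linearCombination K fun w => (w.map b).prod v

theorem vermaIntertwiner_single (b : ι → Module.End K N) (v : N) (w : List ι) (t : K) :
    vermaIntertwiner b v (Finsupp.single w t) = t • (w.map b).prod v :=
  Finsupp.linearCombination_single K t w

theorem semiconj_vermaIntertwiner (b : ι → Module.End K N) (v : N) (i : ι) :
    Function.Semiconj (vermaIntertwiner b v) (vermaE K i) (b i) := by
  refine LinearMap.congr_fun (f := vermaIntertwiner b v ∘ₗ vermaE K i)
    (g := b i ∘ₗ vermaIntertwiner b v) (Finsupp.lhom_ext fun w t => ?_)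
  rw [LinearMap.comp_apply, LinearMap.comp_apply, vermaE_single, vermaIntertwiner_single,
    vermaIntertwiner_single, List.map_cons, List.prod_cons, map_smul, Module.End.mul_apply]

variable {A : Matrix ι ι ℤ} {b : ι → Module.End K N}

theorem serreSubmodule_le_ker_vermaIntertwiner (hb : SatisfiesSerre K A b) (v : N) :
    serreSubmodule K A ≤ LinearMap.ker (vermaIntertwiner b v) := by
  refine serreSubmodule_le (fun i j hij u => ?_) fun k x hx => ?_
  · rw [LinearMap.mem_ker, semiconj_serreElement A (semiconj_vermaIntertwiner b v) i j,
      hb i j hij, LinearMap.zero_apply]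
  · rw [Submodule.mem_comap, LinearMap.mem_ker, semiconj_vermaIntertwiner b v k,
      LinearMap.mem_ker.1 hx, map_zero]

/-- The factorization of `vermaIntertwiner` through the Serre quotient. -/
noncomputable def serreIntertwiner (hb : SatisfiesSerre K A b) (v : N) :
    (Verma K ι ⧸ serreSubmodule K A) →ₗ[K] N :=
  Submodule.liftQ _ (vermaIntertwiner b v) (serreSubmodule_le_ker_vermaIntertwiner hb v)

theorem semiconj_serreIntertwiner [DecidableEq ι] (hA : IsGeneralizedCartan A)
    (hb : SatisfiesSerre K A b) (v : N) (i : ι) :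
    Function.Semiconj (serreIntertwiner hb v) ((serreTriple K hA).e i) (b i) :=
  (Submodule.mkQ_surjective _).forall.2 (semiconj_vermaIntertwiner b v i)

theorem serreIntertwiner_vacuum (hb : SatisfiesSerre K A b) (v : N) :
    serreIntertwiner hb v (Submodule.Quotient.mk (Finsupp.single [] 1)) = v :=
  (vermaIntertwiner_single b v [] 1).trans (one_smul K v)

end Intertwiner

/-! ## The universal property of `g(A)` -/

theorem map_serreElement {K ι L L' : Type*} [CommRing K] [LieRing L] [LieAlgebra K L] [LieRing L']
    [LieAlgebra K L'] (A : Matrix ι ι ℤ) (φ : L →ₗ⁅K⁆ L') (e : ι → L) (i j : ι) :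
    φ (serreElement K A e i j) = serreElement K A (φ ∘ e) i j := by
  rw [serreElement, serreElement]
  generalize (1 - A i j).toNat = n
  induction n with
  | zero => rfl
  | succ n ih => rw [ad_pow_succ_apply, ad_pow_succ_apply, LieHom.map_lie, ih, Function.comp_apply]

section FreeLie

variable {ℓ : ℕ}

theorem freeLie_mem {S : LieSubalgebra ℂ (FreeLie ℓ)} (hE : ∀ i, E i ∈ S) (hF : ∀ i, F i ∈ S)
    (hH : ∀ i, H i ∈ S) (x : FreeLie ℓ) : x ∈ S := by
  have generator_mem : ∀ s, FreeLieAlgebra.of ℂ s ∈ S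
    | .e i => hE i
    | .f i => hF i
    | .h i => hH i
  let retraction : FreeLie ℓ →ₗ⁅ℂ⁆ S := FreeLieAlgebra.lift ℂ fun s => ⟨_, generator_mem s⟩
  have incl_comp : S.incl.comp retraction = LieHom.id :=
    FreeLieAlgebra.hom_ext fun s => by simp [retraction]
  rw [← LieHom.id_apply (R := ℂ) x, ← incl_comp]
  exact (retraction x).2

variable {A : Matrix (Fin ℓ) (Fin ℓ) ℤ} {L : Type*} [LieRing L] [LieAlgebra ℂ L]

namespace ChevalleyTriple

variable (C : ChevalleyTriple ℂ A L)

/-- The Lie algebra homomorphism from the free Lie algebra that sends the generators to a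
Chevalley triple. -/
noncomputable def freeLift : FreeLie ℓ →ₗ⁅ℂ⁆ L :=
  FreeLieAlgebra.lift ℂ fun
    | .e i => C.e i
    | .f i => C.f i
    | .h i => C.h i

theorem freeLift_E (i : Fin ℓ) : C.freeLift (E i) = C.e i := FreeLieAlgebra.lift_of_apply _ _

theorem freeLift_F (i : Fin ℓ) : C.freeLift (F i) = C.f i := FreeLieAlgebra.lift_of_apply _ _

theorem freeLift_H (i : Fin ℓ) : C.freeLift (H i) = C.h i := FreeLieAlgebra.lift_of_apply _ _

theorem serreIdeal_le_ker_freeLift (he : SatisfiesSerre ℂ A C.e) (hf : SatisfiesSerre ℂ A C.f) :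
    serreIdeal A ≤ C.freeLift.ker := by
  refine LieSubmodule.lieSpan_le.2 ?_
  rintro x (((((⟨i, j, rfl⟩ | ⟨i, j, rfl⟩) | ⟨i, j, rfl⟩) | ⟨i, j, rfl⟩) | ⟨i, j, hij, rfl⟩) |
    ⟨i, j, hij, rfl⟩) <;> rw [SetLike.mem_coe, LieHom.mem_ker]
  · rw [LieHom.map_lie, freeLift_H, freeLift_H, C.lie_h_h]
  · rw [map_sub, LieHom.map_lie, freeLift_E, freeLift_F, C.lie_e_f, sub_eq_zero,
      apply_ite C.freeLift, map_zero, freeLift_H]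
  · rw [map_sub, LieHom.map_lie, map_smul, freeLift_H, freeLift_E, C.lie_h_e, sub_self]
  · rw [map_add, LieHom.map_lie, map_smul, freeLift_H, freeLift_F, C.lie_h_f, neg_add_cancel]
  · exact (map_serreElement A C.freeLift E i j).trans
      (by rw [funext C.freeLift_E (f := C.freeLift ∘ E), he i j hij])
  · exact (map_serreElement A C.freeLift F i j).trans
      (by rw [funext C.freeLift_F (f := C.freeLift ∘ F), hf i j hij])

end ChevalleyTriple

variable (A)

/-- The quotient map from the free Lie algebra onto `g(A)`. -/
noncomputable def serreQuotient : FreeLie ℓ →ₗ⁅ℂ⁆ gA A :=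
  { (LieSubmodule.Quotient.mk' (serreIdeal A) : FreeLie ℓ →ₗ[ℂ] gA A) with
    map_lie' := LieSubmodule.Quotient.mk_bracket _ _ _ }

/-- The image of `e i` in `g(A)`. -/
noncomputable def Ebar (i : Fin ℓ) : gA A := serreQuotient A (E i)

/-- The image of `f i` in `g(A)`. -/
noncomputable def Fbar (i : Fin ℓ) : gA A := serreQuotient A (F i)

variable {A}

theorem surjective_serreQuotient : Function.Surjective (serreQuotient A) :=
  LieSubmodule.Quotient.surjective_mk' _

theorem serreQuotient_eq_zero {x : FreeLie ℓ} (hx : x ∈ serreRelations A) :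
    serreQuotient A x = 0 :=
  LieSubmodule.Quotient.mk_eq_zero'.2 (LieSubmodule.subset_lieSpan hx)

variable (A) in
/-- The Chevalley generators of `g(A)`. -/
noncomputable def chevalleyGenerators : ChevalleyTriple ℂ A (gA A) where
  e := Ebar A
  f := Fbar A
  h := Hbar A
  lie_h_h i j := by
    have relation := serreQuotient_eq_zero (A := A) (.inl (.inl (.inl (.inl (.inl ⟨i, j, rfl⟩)))))
    rwa [LieHom.map_lie] at relation
  lie_e_f i j := by
    have relation := serreQuotient_eq_zero (A := A) (.inl (.inl (.inl (.inl (.inr ⟨i, j, rfl⟩)))))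
    rwa [map_sub, LieHom.map_lie, sub_eq_zero, apply_ite (serreQuotient A), map_zero] at relation
  lie_h_e i j := by
    have relation := serreQuotient_eq_zero (A := A) (.inl (.inl (.inl (.inr ⟨i, j, rfl⟩))))
    rwa [map_sub, LieHom.map_lie, map_smul, sub_eq_zero] at relation
  lie_h_f i j := by
    have relation := serreQuotient_eq_zero (A := A) (.inl (.inl (.inr ⟨i, j, rfl⟩)))
    rwa [map_add, LieHom.map_lie, map_smul, add_eq_zero_iff_eq_neg] at relation

theorem lie_Ebar_Fbar (i j : Fin ℓ) : ⁅Ebar A i, Fbar A j⁆ = if i = j then Hbar A i else 0 :=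
  (chevalleyGenerators A).lie_e_f i j

theorem lie_Hbar_Hbar (i j : Fin ℓ) : ⁅Hbar A i, Hbar A j⁆ = 0 :=
  (chevalleyGenerators A).lie_h_h i j

theorem lie_Hbar_Ebar (i j : Fin ℓ) : ⁅Hbar A i, Ebar A j⁆ = (A i j : ℂ) • Ebar A j :=
  (chevalleyGenerators A).lie_h_e i j

theorem lie_Hbar_Fbar (i j : Fin ℓ) : ⁅Hbar A i, Fbar A j⁆ = -((A i j : ℂ) • Fbar A j) :=
  (chevalleyGenerators A).lie_h_f i j

theorem satisfiesSerre_Ebar : SatisfiesSerre ℂ A (Ebar A) := fun i j hij =>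
  (map_serreElement A (serreQuotient A) E i j).symm.trans
    (serreQuotient_eq_zero (.inl (.inr ⟨i, j, hij, rfl⟩)))

theorem gA_mem {S : LieSubalgebra ℂ (gA A)} (hE : ∀ i, Ebar A i ∈ S) (hF : ∀ i, Fbar A i ∈ S)
    (x : gA A) : x ∈ S := by
  have hH (i : Fin ℓ) : Hbar A i ∈ S := by
    have lie_mem := S.lie_mem (hE i) (hF i)
    rwa [lie_Ebar_Fbar, if_pos rfl] at lie_mem
  obtain ⟨x, rfl⟩ := surjective_serreQuotient x
  exact freeLie_mem (S := S.comap (serreQuotient A)) hE hF hH x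

/-- The universal property of `g(A)`. -/
noncomputable def serreLift (C : ChevalleyTriple ℂ A L) (he : SatisfiesSerre ℂ A C.e)
    (hf : SatisfiesSerre ℂ A C.f) : gA A →ₗ⁅ℂ⁆ L :=
  { Submodule.liftQ (serreIdeal A).toSubmodule (C.freeLift : FreeLie ℓ →ₗ[ℂ] L)
      (C.serreIdeal_le_ker_freeLift he hf) with
    map_lie' := by
      intro x y
      obtain ⟨x, rfl⟩ := surjective_serreQuotient x
      obtain ⟨y, rfl⟩ := surjective_serreQuotient y
      exact C.freeLift.map_lie x y }

theorem serreLift_Ebar (C : ChevalleyTriple ℂ A L) (he : SatisfiesSerre ℂ A C.e)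
    (hf : SatisfiesSerre ℂ A C.f) (i : Fin ℓ) : serreLift C he hf (Ebar A i) = C.e i :=
  C.freeLift_E i

end FreeLie

/-! ## The level one subspace of `𝔉` -/

theorem isGeneralizedCartan_AF : IsGeneralizedCartan AF where
  diag := by decide
  nonpos i j := by fin_cases i <;> fin_cases j <;> simp [AF]
  eq_zero_symm i j := by fin_cases i <;> fin_cases j <;> simp [AF]

theorem satisfiesSerre_AF_iff {K L : Type*} [CommRing K] [LieRing L] [LieAlgebra K L]
    {e : Fin 3 → L} : SatisfiesSerre K AF e ↔
      ⁅e 0, ⁅e 0, ⁅e 0, e 1⁆⁆⁆ = 0 ∧ ⁅e 1, ⁅e 1, ⁅e 1, e 0⁆⁆⁆ = 0 ∧ ⁅e 0, e 2⁆ = 0 ∧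
        ⁅e 1, ⁅e 1, e 2⁆⁆ = 0 ∧ ⁅e 2, ⁅e 2, e 1⁆⁆ = 0 := by
  have exponent (i j : Fin 3) (n : ℕ) (h : (1 - AF i j).toNat = n) :
      serreElement K AF e i j = (ad K L (e i) ^ n) (e j) := by rw [serreElement, h]
  have s01 := exponent 0 1 3 (by decide)
  have s10 := exponent 1 0 3 (by decide)
  have s02 := exponent 0 2 1 (by decide)
  have s20 := exponent 2 0 1 (by decide)
  have s12 := exponent 1 2 2 (by decide)
  have s21 := exponent 2 1 2 (by decide)
  simp only [ad_pow_succ_apply, pow_zero, Module.End.one_apply] at s01 s10 s02 s20 s12 s21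
  rw [← s01, ← s10, ← s02, ← s12, ← s21]
  refine ⟨fun h => ⟨h 0 1 (by decide), h 1 0 (by decide), h 0 2 (by decide), h 1 2 (by decide),
    h 2 1 (by decide)⟩, fun ⟨h01, h10, h02, h12, h21⟩ i j hij => ?_⟩
  have h20 : serreElement K AF e 2 0 = 0 := by rw [s20, ← lie_skew, ← s02, h02, neg_zero]
  fin_cases i <;> fin_cases j <;> first | assumption | exact absurd rfl hij

section LoopSerre

variable {K L : Type*} [CommRing K] [LieRing L] [LieAlgebra K L]

namespace LoopTriple

variable (R : LoopTriple K L)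

theorem lie_e_zero_serre : ⁅R.e 0, ⁅R.e 0, ⁅R.e 0, R.f 0⁆⁆⁆ = 0 := by
  rw [R.lie_e_f, ← lie_skew _ (R.h _), R.lie_h_e, lie_neg, lie_smul, R.lie_e_e, smul_zero,
    neg_zero]

theorem lie_f_zero_serre : ⁅R.f 0, ⁅R.f 0, ⁅R.f 0, R.e 0⁆⁆⁆ = 0 := by
  rw [← lie_skew _ (R.e 0), R.lie_e_f, lie_neg, ← lie_skew _ (R.h _), R.lie_h_f, neg_neg, lie_neg,
    lie_smul, R.lie_f_f, smul_zero, neg_zero]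

end LoopTriple

end LoopSerre

section Loop

variable {K : Type*} [Field K] {L L' : Type*} [LieRing L] [LieAlgebra K L] [LieRing L']
  [LieAlgebra K L']

theorem map_loopE (φ : L →ₗ⁅K⁆ L') (x y : L) (n : ℕ) :
    φ (loopE K x y n) = loopE K (φ x) (φ y) n := by
  induction n with
  | zero => rfl
  | succ n ih => rw [loopE, loopE, map_smul, LieHom.map_lie, LieHom.map_lie, ih]

theorem semiconj_loopE {M N : Type*} [AddCommGroup M] [Module K M] [AddCommGroup N] [Module K N]
    {φ : M →ₗ[K] N} {a a' : Module.End K M} {b b' : Module.End K N}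
    (h : Function.Semiconj φ a b) (h' : Function.Semiconj φ a' b') (n : ℕ) :
    Function.Semiconj φ ⇑(loopE K a a' n) ⇑(loopE K b b' n) := by
  induction n with
  | zero => exact h
  | succ n ih => exact semiconj_smul _ (semiconj_lie (semiconj_lie h h') ih)

namespace LoopTriple

/-- The image of a loop triple under a homomorphism of Lie algebras. -/
def map (R : LoopTriple K L) (φ : L →ₗ⁅K⁆ L') : LoopTriple K L' where
  e n := φ (R.e n)
  f n := φ (R.f n)
  h n := φ (R.h n)
  lie_e_e m n := by rw [← LieHom.map_lie, R.lie_e_e, map_zero]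
  lie_f_f m n := by rw [← LieHom.map_lie, R.lie_f_f, map_zero]
  lie_h_h m n := by rw [← LieHom.map_lie, R.lie_h_h, map_zero]
  lie_e_f m n := by rw [← LieHom.map_lie, R.lie_e_f]
  lie_h_e m n := by rw [← LieHom.map_lie, R.lie_h_e, map_smul]
  lie_h_f m n := by rw [← LieHom.map_lie, R.lie_h_f, map_neg, map_smul]

variable (R : LoopTriple K L) [CharZero K]

theorem loopE_eq_e (n : ℕ) : loopE K (R.e 0) (R.f 0) n = R.e n := by
  induction n with
  | zero => rfl
  | succ n ih =>
    rw [loopE, ih, R.lie_e_f, R.lie_h_e, zero_add, zero_add, inv_smul_smul₀ two_ne_zero]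

theorem loopF_eq_f (n : ℕ) : loopF K (R.e 0) (R.f 0) n = R.f n := by
  induction n with
  | zero => rfl
  | succ n ih =>
    rw [loopF, loopE, ← loopF, ih, ← lie_skew (R.f 0), R.lie_e_f, neg_lie, R.lie_h_f, neg_neg,
      zero_add, zero_add, inv_smul_smul₀ two_ne_zero]

end LoopTriple

end Loop

section ExtremalRelation

variable {K N N' : Type*} [CommRing K] [AddCommGroup N] [Module K N] [AddCommGroup N']
  [Module K N'] {P : N → N' → Prop} {v : N} {v' : N'}

theorem extremalChain_rel {g : ℕ → Module.End K N} {g' : ℕ → Module.End K N'}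
    (hg : ∀ n u u', P u u' → P (g n u) (g' n u')) (hv : P v v') (r : ℕ) :
    P (extremalChain g v r) (extremalChain g' v' r) := by
  induction r with
  | zero => exact hv
  | succ r ih => exact hg _ _ _ ih

theorem list_prod_apply_rel {g : ℕ → Module.End K N} {g' : ℕ → Module.End K N'}
    (hg : ∀ n u u', P u u' → P (g n u) (g' n u')) (hv : P v v') (l : List ℕ) :
    P ((l.map g).prod v) ((l.map g').prod v') := by
  induction l with
  | nil => exact hv
  | cons n l ih =>
    rw [List.map_cons, List.prod_cons, List.map_cons, List.prod_cons]
    exact hg _ _ _ ih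

theorem LoopTriple.extremal_rel {R : LoopTriple K (Module.End K N)}
    {R' : LoopTriple K (Module.End K N')} (he : ∀ n u u', P u u' → P (R.e n u) (R'.e n u'))
    (hf : ∀ n u u', P u u' → P (R.f n u) (R'.f n u')) (hv : P v v') (c : ℤ) :
    P (R.extremal v c) (R'.extremal v' c) := by
  obtain ⟨r, rfl | rfl⟩ := c.eq_nat_or_neg
  · exact extremalChain_rel (fun n => he (n + 1)) hv r
  · rw [extremal_neg_natCast, extremal_neg_natCast]
    exact extremalChain_rel hf hv r

end ExtremalRelation

section Affine

variable {K M : Type*} [CommRing K] [AddCommGroup M] [Module K M]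

/-- The linear endomorphisms of `M`, as infinitesimal affine transformations acting on the cone
`M × K`. -/
def affineLinear : Module.End K M →ₗ⁅K⁆ Module.End K (M × K) where
  toFun a := LinearMap.inl K M K ∘ₗ a ∘ₗ LinearMap.fst K M K
  map_add' a b := LinearMap.ext fun u => by simp
  map_smul' t a := LinearMap.ext fun u => by simp
  map_lie' := LinearMap.ext fun u => by simp [Ring.lie_def]

/-- The infinitesimal translation of `M` by `m`, acting on the cone `M × K`. -/
def translation : M →ₗ[K] Module.End K (M × K) where
  toFun m := LinearMap.inl K M K ∘ₗ LinearMap.toSpanSingleton K M m ∘ₗ LinearMap.snd K M K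
  map_add' a b := LinearMap.ext fun u => by simp
  map_smul' t a := LinearMap.ext fun u => Prod.ext (smul_comm u.2 t a) (mul_zero t).symm

theorem translation_apply (m : M) (u : M × K) : translation (K := K) m u = (u.2 • m, 0) := rfl

theorem lie_affineLinear_translation (a : Module.End K M) (m : M) :
    ⁅affineLinear a, translation (K := K) m⁆ = translation (a m) :=
  LinearMap.ext fun u => by simp [affineLinear, translation, Ring.lie_def]

theorem lie_translation_translation (m n : M) :
    ⁅translation (K := K) m, translation (K := K) n⁆ = 0 :=
  LinearMap.ext fun u => by simp [translation, Ring.lie_def]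

/-- The operators on `M × K` by which the positive Chevalley generators of `𝔉` act, when `M` is a
module over the positive part of affine `sl₂` with vacuum `v`. -/
def affineGenerators (R : LoopTriple K (Module.End K M)) (v : M) :
    Fin 3 → Module.End K (M × K) :=
  ![affineLinear (R.e 0), affineLinear (R.f 0), translation v]

theorem satisfiesSerre_affineGenerators {R : LoopTriple K (Module.End K M)} {v : M}
    (hv : R.IsVacuum v) : SatisfiesSerre K AF (affineGenerators R v) := by
  refine satisfiesSerre_AF_iff.2 ⟨?_, ?_, ?_, ?_, ?_⟩ <;>
    simp only [affineGenerators, Matrix.cons_val]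
  · rw [← LieHom.map_lie, ← LieHom.map_lie, ← LieHom.map_lie, R.lie_e_zero_serre, map_zero]
  · rw [← LieHom.map_lie, ← LieHom.map_lie, ← LieHom.map_lie, R.lie_f_zero_serre, map_zero]
  · rw [lie_affineLinear_translation, hv.e_zero, map_zero]
  · rw [lie_affineLinear_translation, lie_affineLinear_translation, hv.f_zero_f_zero, map_zero]
  · rw [← lie_skew _ (affineLinear _), lie_affineLinear_translation, lie_neg,
      lie_translation_translation, neg_zero]

end Affine

theorem serre_Ebar_AF : ⁅Ebar AF 0, ⁅Ebar AF 0, ⁅Ebar AF 0, Ebar AF 1⁆⁆⁆ = 0 ∧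
    ⁅Ebar AF 1, ⁅Ebar AF 1, ⁅Ebar AF 1, Ebar AF 0⁆⁆⁆ = 0 ∧ ⁅Ebar AF 0, Ebar AF 2⁆ = 0 ∧
      ⁅Ebar AF 1, ⁅Ebar AF 1, Ebar AF 2⁆⁆ = 0 ∧ ⁅Ebar AF 2, ⁅Ebar AF 2, Ebar AF 1⁆⁆ = 0 :=
  satisfiesSerre_AF_iff.1 satisfiesSerre_Ebar

/-- The positive part of the affine `sl₂` generated by `e 0` and `e 1` inside `𝔉`. -/
noncomputable def loopAF : LoopTriple ℂ (gA AF) :=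
  .ofSerre serre_Ebar_AF.1 serre_Ebar_AF.2.1

/-- The adjoint action of `loopAF` on `𝔉`. -/
noncomputable def adLoopAF : LoopTriple ℂ (Module.End ℂ (gA AF)) := loopAF.map (ad ℂ (gA AF))

/-- The representation of `𝔉` on the Serre quotient of its Verma module. -/
noncomputable def serreRep :
    gA AF →ₗ⁅ℂ⁆ Module.End ℂ (Verma ℂ (Fin 3) ⧸ serreSubmodule ℂ AF) :=
  serreLift (serreTriple ℂ isGeneralizedCartan_AF) (satisfiesSerre_serreTriple_e _)
    (satisfiesSerre_serreTriple_f _)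

section LevelOne

variable {M : Type*} [AddCommGroup M] [Module ℂ M] {R : LoopTriple ℂ (Module.End ℂ M)} {v : M}
  (hv : R.IsVacuum v)

/-- The intertwining map from the Serre quotient to `M × ℂ` that sends the highest weight vector
to `(0, 1)`. -/
noncomputable def affineIntertwiner :
    (Verma ℂ (Fin 3) ⧸ serreSubmodule ℂ AF) →ₗ[ℂ] M × ℂ :=
  serreIntertwiner (satisfiesSerre_affineGenerators hv) (0, 1)

theorem semiconj_serreRep_Ebar (i : Fin 3) : Function.Semiconj (affineIntertwiner hv)
    (serreRep (Ebar AF i)) (affineGenerators R v i) := by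
  rw [serreRep, serreLift_Ebar]
  exact semiconj_serreIntertwiner _ _ _ _

theorem semiconj_serreRep_e (n : ℕ) : Function.Semiconj (affineIntertwiner hv)
    (serreRep (loopAF.e n)) (affineLinear (R.e n)) := by
  change Function.Semiconj _ (serreRep (loopE ℂ _ _ n)) _
  rw [map_loopE, ← R.loopE_eq_e, map_loopE]
  exact semiconj_loopE (semiconj_serreRep_Ebar hv 0) (semiconj_serreRep_Ebar hv 1) n

theorem semiconj_serreRep_f (n : ℕ) : Function.Semiconj (affineIntertwiner hv)
    (serreRep (loopAF.f n)) (affineLinear (R.f n)) := by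
  change Function.Semiconj _ (serreRep (loopE ℂ _ _ n)) _
  rw [map_loopE, ← R.loopF_eq_f, loopF, map_loopE]
  exact semiconj_loopE (semiconj_serreRep_Ebar hv 1) (semiconj_serreRep_Ebar hv 0) n

theorem semiconj_serreRep_h (n : ℕ) : Function.Semiconj (affineIntertwiner hv)
    (serreRep (loopAF.h n)) (affineLinear (R.h n)) := by
  rw [← zero_add n, ← loopAF.lie_e_f, ← R.lie_e_f, LieHom.map_lie, LieHom.map_lie]
  exact semiconj_lie (semiconj_serreRep_e hv 0) (semiconj_serreRep_f hv n)

/-- The element `u` of `𝔉` acts on `M × ℂ` as the translation by `m`. -/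
def ActsAsTranslation (u : gA AF) (m : M) : Prop :=
  Function.Semiconj (affineIntertwiner hv) (serreRep u) (translation m)

theorem ActsAsTranslation.lie {hv : R.IsVacuum v} {x : gA AF} {a : Module.End ℂ M}
    (hx : Function.Semiconj (affineIntertwiner hv) (serreRep x) (affineLinear a)) (u : gA AF)
    (m : M) (hu : ActsAsTranslation hv u m) : ActsAsTranslation hv ⁅x, u⁆ (a m) := by
  rw [ActsAsTranslation, LieHom.map_lie, ← lie_affineLinear_translation]
  exact semiconj_lie hx hu

theorem actsAsTranslation_word (l : List ℕ) (c : ℤ) :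
    ActsAsTranslation hv ((l.map adLoopAF.h).prod (adLoopAF.extremal (Ebar AF 2) c))
      ((l.map R.h).prod (R.extremal v c)) := by
  refine list_prod_apply_rel (P := ActsAsTranslation hv)
    (fun n => .lie (semiconj_serreRep_h hv n)) ?_ l
  exact LoopTriple.extremal_rel (P := ActsAsTranslation hv)
    (fun n => .lie (semiconj_serreRep_e hv n)) (fun n => .lie (semiconj_serreRep_f hv n))
    (semiconj_serreRep_Ebar hv 2) c

/-- Acting on the highest weight vector and taking the component in `M` of the image under
`affineIntertwiner`. -/
noncomputable def levelOneMap : gA AF →ₗ[ℂ] M :=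
  LinearMap.fst ℂ M ℂ ∘ₗ affineIntertwiner hv ∘ₗ
    LinearMap.applyₗ (Submodule.Quotient.mk (Finsupp.single [] 1)) ∘ₗ
      (serreRep : gA AF →ₗ[ℂ] Module.End ℂ (Verma ℂ (Fin 3) ⧸ serreSubmodule ℂ AF))

theorem levelOneMap_word (l : List ℕ) (c : ℤ) :
    levelOneMap hv ((l.map adLoopAF.h).prod (adLoopAF.extremal (Ebar AF 2) c)) =
      (l.map R.h).prod (R.extremal v c) := by
  change (affineIntertwiner hv (serreRep _ _)).1 = _
  rw [actsAsTranslation_word hv l c, affineIntertwiner, serreIntertwiner_vacuum,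
    translation_apply, one_smul]

end LevelOne

theorem linearIndependent_adLoopAF_h_extremal (c : ℤ) : LinearIndependent ℂ fun s : Multiset ℕ =>
    (s.toList.map adLoopAF.h).prod (adLoopAF.extremal (Ebar AF 2) c) := by
  refine .of_comp (levelOneMap (isVacuum_vacuum ℂ)) ?_
  simpa only [Function.comp_def, levelOneMap_word] using
    linearIndependent_fockTriple_h_extremal ℂ c

/-! ## Triangular and root space decompositions of `g(A)` -/

namespace ChevalleyTriple

variable {K ι L : Type*} [CommRing K] [DecidableEq ι] {A : Matrix ι ι ℤ} [LieRing L]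
  [LieAlgebra K L] (C : ChevalleyTriple K A L)

theorem swap_swap : C.swap.swap = C := by
  simp only [swap, neg_neg]

/-- The subalgebra `n₊` generated by the `e i`, as the span of their right-normed brackets. -/
def positivePart : Submodule K L := ⨆ i, cyclicSpan (fun j => ad K L (C.e j)) (C.e i)

/-- The span of the `h i`. -/
def cartan : Submodule K L := Submodule.span K (Set.range C.h)

theorem e_mem_positivePart (i : ι) : C.e i ∈ C.positivePart :=
  Submodule.mem_iSup_of_mem i (mem_cyclicSpan_self _ _)

theorem h_mem_cartan (i : ι) : C.h i ∈ C.cartan := Submodule.subset_span ⟨i, rfl⟩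

theorem positivePart_le {S : Submodule K L} (he : ∀ i, C.e i ∈ S)
    (hS : ∀ j, S ≤ S.comap (ad K L (C.e j))) : C.positivePart ≤ S :=
  iSup_le fun i => cyclicSpan_le hS (he i)

theorem positivePart_le_comap_e (k : ι) :
    C.positivePart ≤ C.positivePart.comap (ad K L (C.e k)) :=
  iSup_le fun i => (cyclicSpan_le_comap _ _ k).trans <| Submodule.comap_mono <|
    le_iSup (fun i => cyclicSpan (fun j => ad K L (C.e j)) (C.e i)) i

theorem positivePart_le_comap_h (k : ι) :
    C.positivePart ≤ C.positivePart.comap (ad K L (C.h k)) := by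
  refine (C.positivePart_le (S := C.positivePart ⊓ C.positivePart.comap (ad K L (C.h k)))
    (fun i => ⟨C.e_mem_positivePart i, ?_⟩) fun j x ⟨hx, hhx⟩ =>
      ⟨C.positivePart_le_comap_e j hx, ?_⟩).trans inf_le_right
  · rw [SetLike.mem_coe, Submodule.mem_comap, ad_apply, C.lie_h_e]
    exact Submodule.smul_mem _ _ (C.e_mem_positivePart i)
  · rw [SetLike.mem_coe, Submodule.mem_comap, ad_apply, ad_apply, leibniz_lie, C.lie_h_e, smul_lie]
    exact add_mem (Submodule.smul_mem _ _ (C.positivePart_le_comap_e j hx))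
      (C.positivePart_le_comap_e j hhx)

theorem cartan_le_comap_e (k : ι) : C.cartan ≤ C.positivePart.comap (ad K L (C.e k)) := by
  refine Submodule.span_le.2 ?_
  rintro _ ⟨i, rfl⟩
  rw [SetLike.mem_coe, Submodule.mem_comap, ad_apply, ← lie_skew, C.lie_h_e]
  exact neg_mem (Submodule.smul_mem _ _ (C.e_mem_positivePart k))

theorem positivePart_le_comap_f (k : ι) :
    C.positivePart ≤ (C.positivePart ⊔ C.cartan).comap (ad K L (C.f k)) := by
  refine (C.positivePart_le
    (S := C.positivePart ⊓ (C.positivePart ⊔ C.cartan).comap (ad K L (C.f k)))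
    (fun i => ⟨C.e_mem_positivePart i, ?_⟩) fun j x ⟨hx, hfx⟩ =>
      ⟨C.positivePart_le_comap_e j hx, ?_⟩).trans inf_le_right
  · rw [SetLike.mem_coe, Submodule.mem_comap, ad_apply, C.lie_f_e]
    split_ifs
    · exact neg_mem (Submodule.mem_sup_right (C.h_mem_cartan k))
    · exact zero_mem _
  · rw [SetLike.mem_coe, Submodule.mem_comap, ad_apply, ad_apply, leibniz_lie, C.lie_f_e]
    refine add_mem (Submodule.mem_sup_left ?_) (Submodule.mem_sup_left ?_)
    · split_ifs
      · rw [neg_lie]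
        exact neg_mem (C.positivePart_le_comap_h k hx)
      · rw [zero_lie]
        exact zero_mem _
    · exact sup_le (C.positivePart_le_comap_e j) (C.cartan_le_comap_e j) hfx

theorem swap_cartan : C.swap.cartan = C.cartan := by
  have cartan_swap_le (C : ChevalleyTriple K A L) : C.swap.cartan ≤ C.cartan := by
    refine Submodule.span_le.2 ?_
    rintro _ ⟨i, rfl⟩
    exact neg_mem (C.h_mem_cartan i)
  refine le_antisymm (cartan_swap_le C) ?_
  simpa only [swap_swap] using cartan_swap_le C.swap

/-- The sum `n₊ + h + n₋`. -/
def triangularSpan : Submodule K L := C.positivePart ⊔ C.cartan ⊔ C.swap.positivePart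

theorem swap_triangularSpan : C.swap.triangularSpan = C.triangularSpan := by
  rw [triangularSpan, triangularSpan, swap_swap, swap_cartan, sup_comm,
    sup_comm C.swap.positivePart, sup_assoc]

theorem e_mem_triangularSpan (i : ι) : C.e i ∈ C.triangularSpan :=
  Submodule.mem_sup_left (Submodule.mem_sup_left (C.e_mem_positivePart i))

theorem f_mem_triangularSpan (i : ι) : C.f i ∈ C.triangularSpan :=
  Submodule.mem_sup_right (C.swap.e_mem_positivePart i)

theorem triangularSpan_le_comap_e (k : ι) :
    C.triangularSpan ≤ C.triangularSpan.comap (ad K L (C.e k)) := by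
  have positivePart_le : C.positivePart ≤ C.triangularSpan := le_sup_left.trans le_sup_left
  refine sup_le (sup_le ?_ ?_) ?_
  · exact (C.positivePart_le_comap_e k).trans (Submodule.comap_mono positivePart_le)
  · exact (C.cartan_le_comap_e k).trans (Submodule.comap_mono positivePart_le)
  · refine (C.swap.positivePart_le_comap_f k).trans (Submodule.comap_mono ?_)
    rw [swap_cartan]
    exact sup_le le_sup_right (le_sup_right.trans le_sup_left)

theorem triangularSpan_le_comap_f (k : ι) :
    C.triangularSpan ≤ C.triangularSpan.comap (ad K L (C.f k)) := by
  rw [← swap_triangularSpan]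
  exact C.swap.triangularSpan_le_comap_e k

end ChevalleyTriple

/-- The Lie subalgebra of the elements whose adjoint action preserves `S`. -/
def lieStabilizer {K L : Type*} [CommRing K] [LieRing L] [LieAlgebra K L] (S : Submodule K L) :
    LieSubalgebra K L where
  carrier := {x | S ≤ S.comap (ad K L x)}
  add_mem' hx hy u hu := by
    rw [Submodule.mem_comap, ad_apply, add_lie]
    exact add_mem (hx hu) (hy hu)
  zero_mem' u _ := by
    rw [Submodule.mem_comap, ad_apply, zero_lie]
    exact zero_mem S
  smul_mem' t x hx u hu := by
    rw [Submodule.mem_comap, ad_apply, smul_lie]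
    exact S.smul_mem t (hx hu)
  lie_mem' hx hy u hu := by
    rw [Submodule.mem_comap, ad_apply, lie_lie]
    exact sub_mem (hx (hy hu)) (hy (hx hu))

section RootSpace

variable {ℓ : ℕ} {A : Matrix (Fin ℓ) (Fin ℓ) ℤ}

variable (A) in
theorem triangularSpan_chevalleyGenerators : (chevalleyGenerators A).triangularSpan = ⊤ := by
  set C := chevalleyGenerators A
  have ideal (x : gA A) : x ∈ lieStabilizer C.triangularSpan :=
    gA_mem C.triangularSpan_le_comap_e C.triangularSpan_le_comap_f x
  let subalgebra : LieSubalgebra ℂ (gA A) :=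
    { C.triangularSpan with lie_mem' := fun {x _} _ hy => ideal x hy }
  exact eq_top_iff.2 fun x _ =>
    gA_mem (S := subalgebra) C.e_mem_triangularSpan C.f_mem_triangularSpan x

theorem mem_rootSpace_iff {c : Fin ℓ → ℤ} {x : gA A} :
    x ∈ rootSpace A c ↔ ∀ i, ⁅Hbar A i, x⁆ = ((∑ j, A i j * c j : ℤ) : ℂ) • x := by
  simp only [rootSpace, Submodule.mem_iInf, Module.End.mem_eigenspace_iff, ad_apply]

theorem lie_mem_rootSpace {c d : Fin ℓ → ℤ} {x y : gA A} (hx : x ∈ rootSpace A c)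
    (hy : y ∈ rootSpace A d) : ⁅x, y⁆ ∈ rootSpace A (c + d) := by
  rw [mem_rootSpace_iff] at hx hy ⊢
  intro i
  rw [leibniz_lie, hx, hy, smul_lie, lie_smul, ← add_smul, ← Int.cast_add,
    ← Finset.sum_add_distrib]
  simp only [Pi.add_apply, mul_add]

theorem Ebar_mem_rootSpace (j : Fin ℓ) : Ebar A j ∈ rootSpace A (Pi.single j 1) :=
  mem_rootSpace_iff.2 fun i => by
    rw [lie_Hbar_Ebar]
    simp [Pi.single_apply]

theorem Fbar_mem_rootSpace (j : Fin ℓ) : Fbar A j ∈ rootSpace A (-Pi.single j 1) :=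
  mem_rootSpace_iff.2 fun i => by
    rw [lie_Hbar_Fbar]
    simp [Pi.single_apply]

theorem Hbar_mem_rootSpace (j : Fin ℓ) : Hbar A j ∈ rootSpace A 0 :=
  mem_rootSpace_iff.2 fun i => by
    rw [lie_Hbar_Hbar]
    simp

theorem iSupIndep_rootSpace (hA : Function.Injective A.mulVec) : iSupIndep (rootSpace A) := by
  have maxGenEigenspaces := Module.End.independent_iInf_maxGenEigenspace_of_forall_mapsTo
    (fun i => ad ℂ (gA A) (Hbar A i)) fun i j μ => by
      refine Module.End.mapsTo_maxGenEigenspace_of_comm (LinearMap.ext fun u => ?_) μ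
      exact (leibniz_lie (Hbar A j) (Hbar A i) u).trans
        (by rw [lie_Hbar_Hbar, zero_lie, zero_add]; rfl)
  have eigenvalues_injective :
      Function.Injective fun (c : Fin ℓ → ℤ) i => ((A.mulVec c i : ℤ) : ℂ) :=
    Int.cast_injective.comp_left.comp hA
  exact (maxGenEigenspaces.comp eigenvalues_injective).mono fun c =>
    iInf_mono fun i => Module.End.eigenspace_le_maxGenEigenspace

end RootSpace

/-! ## Level one root spaces of `𝔉` -/

theorem cyclicSpan_eq_span_range_multiset {K N ι : Type*} [CommRing K] [AddCommGroup N]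
    [Module K N] {k : ι → Module.End K N} (hk : ∀ i j, Commute (k i) (k j)) (v : N) :
    cyclicSpan k v =
      Submodule.span K (Set.range fun s : Multiset ι => (s.toList.map k).prod v) := by
  refine congrArg (Submodule.span K) (subset_antisymm ?_ ?_) <;> rintro _ ⟨w, rfl⟩
  · have perm : ((w : Multiset ι).toList.map k).Perm (w.map k) :=
      (Multiset.coe_eq_coe.1 (Multiset.coe_toList _)).map k
    exact ⟨w, congrArg (· v) (perm.prod_eq'
      (List.pairwise_map.2 (List.pairwise_of_forall fun i j => hk i j)))⟩
  · exact ⟨w.toList, rfl⟩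

theorem isVacuum_adLoopAF : adLoopAF.IsVacuum (Ebar AF 2) where
  e_zero := serre_Ebar_AF.2.2.1
  f_zero_f_zero := serre_Ebar_AF.2.2.2.1

section Weights

theorem lie_mem_rootSpace_vec3 {a b c a' b' c' a'' b'' c'' : ℤ} {x y : gA AF}
    (hx : x ∈ rootSpace AF ![a, b, c]) (hy : y ∈ rootSpace AF ![a', b', c'])
    (ha : a + a' = a'') (hb : b + b' = b'') (hc : c + c' = c'') :
    ⁅x, y⁆ ∈ rootSpace AF ![a'', b'', c''] := by
  have lie_mem := lie_mem_rootSpace hx hy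
  rwa [Matrix.vec3_add, ha, hb, hc] at lie_mem

theorem Ebar_zero_mem_rootSpace : Ebar AF 0 ∈ rootSpace AF ![1, 0, 0] := by
  convert Ebar_mem_rootSpace (A := AF) 0
  decide

theorem Ebar_one_mem_rootSpace : Ebar AF 1 ∈ rootSpace AF ![0, 1, 0] := by
  convert Ebar_mem_rootSpace (A := AF) 1
  decide

theorem Ebar_two_mem_rootSpace : Ebar AF 2 ∈ rootSpace AF ![0, 0, 1] := by
  convert Ebar_mem_rootSpace (A := AF) 2
  decide

theorem loopAF_e_mem_rootSpace (n : ℕ) : loopAF.e n ∈ rootSpace AF ![n + 1, n, 0] := by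
  induction n with
  | zero => exact Ebar_zero_mem_rootSpace
  | succ n ih =>
    refine Submodule.smul_mem _ _ (lie_mem_rootSpace_vec3 (lie_mem_rootSpace_vec3
      Ebar_zero_mem_rootSpace Ebar_one_mem_rootSpace rfl rfl rfl) ih ?_ ?_ rfl) <;>
    · push_cast
      ring

theorem loopAF_f_mem_rootSpace (n : ℕ) : loopAF.f n ∈ rootSpace AF ![n, n + 1, 0] := by
  induction n with
  | zero => exact Ebar_one_mem_rootSpace
  | succ n ih =>
    refine Submodule.smul_mem _ _ (lie_mem_rootSpace_vec3 (lie_mem_rootSpace_vec3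
      Ebar_one_mem_rootSpace Ebar_zero_mem_rootSpace rfl rfl rfl) ih ?_ ?_ rfl) <;>
    · push_cast
      ring

theorem loopAF_h_mem_rootSpace (n : ℕ) : loopAF.h n ∈ rootSpace AF ![n + 1, n + 1, 0] := by
  rw [← zero_add n, ← loopAF.lie_e_f]
  refine lie_mem_rootSpace_vec3 (loopAF_e_mem_rootSpace 0) (loopAF_f_mem_rootSpace n) ?_ ?_ rfl <;>
  · push_cast
    ring

/-- The general element `a α₁ + b α₂ + α₃` of level one, parametrized by `c = a - b` and by its
height `n = b - c ^ 2` above the weight of the extremal vector `v_c`. -/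
def levelOneWeight (c n : ℤ) : Fin 3 → ℤ := ![c ^ 2 + c + n, c ^ 2 + n, 1]

theorem levelOneWeight_eq (a b : ℤ) :
    levelOneWeight (a - b) (b - (a - b) ^ 2) = ![a, b, 1] :=
  Matrix.vec3_eq (by ring) (by ring) rfl

theorem extremal_mem_rootSpace (c : ℤ) :
    adLoopAF.extremal (Ebar AF 2) c ∈ rootSpace AF (levelOneWeight c 0) := by
  obtain ⟨r, rfl | rfl⟩ := c.eq_nat_or_neg
  · rw [LoopTriple.extremal_natCast]
    induction r with
    | zero => exact Ebar_two_mem_rootSpace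
    | succ r ih =>
      refine lie_mem_rootSpace_vec3 (loopAF_e_mem_rootSpace _) ih ?_ ?_ rfl <;>
      · push_cast
        ring
  · rw [LoopTriple.extremal_neg_natCast]
    induction r with
    | zero => exact Ebar_two_mem_rootSpace
    | succ r ih =>
      refine lie_mem_rootSpace_vec3 (loopAF_f_mem_rootSpace _) ih ?_ ?_ rfl <;>
      · push_cast
        ring

theorem list_prod_extremal_mem_rootSpace (l : List ℕ) (c : ℤ) :
    (l.map adLoopAF.h).prod (adLoopAF.extremal (Ebar AF 2) c) ∈
      rootSpace AF (levelOneWeight c (l.map Nat.succ).sum) := by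
  induction l with
  | nil => exact extremal_mem_rootSpace c
  | cons i l ih =>
    rw [List.map_cons, List.map_cons, List.prod_cons, List.sum_cons]
    refine lie_mem_rootSpace_vec3 (loopAF_h_mem_rootSpace i) ih ?_ ?_ rfl <;>
    · push_cast
      ring

end Weights

/-- The vector `h s₁ ⋯ h sₖ v_c` of level one. -/
noncomputable def levelOneWord (c : ℤ) (s : Multiset ℕ) : gA AF :=
  (s.toList.map adLoopAF.h).prod (adLoopAF.extremal (Ebar AF 2) c)

/-- The span of the words `h s₁ ⋯ h sₖ v_c` of total degree `∑ (sᵢ + 1) = n`. -/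
noncomputable def wordSpan (c n : ℤ) : Submodule ℂ (gA AF) :=
  Submodule.span ℂ (levelOneWord c '' {s | ((s.map Nat.succ).sum : ℤ) = n})

theorem wordSpan_le_rootSpace (c n : ℤ) : wordSpan c n ≤ rootSpace AF (levelOneWeight c n) := by
  refine Submodule.span_le.2 ?_
  rintro _ ⟨s, rfl, rfl⟩
  have word_mem := list_prod_extremal_mem_rootSpace s.toList c
  rwa [← Multiset.sum_coe, ← Multiset.map_coe, Multiset.coe_toList] at word_mem

theorem extremalSpan_le_iSup_wordSpan :
    adLoopAF.extremalSpan (Ebar AF 2) ≤ ⨆ (c : ℤ) (n : ℤ), wordSpan c n := by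
  refine iSup_mono fun c => ?_
  rw [cyclicSpan_eq_span_range_multiset fun i j => commute_iff_lie_eq.2 (adLoopAF.lie_h_h i j)]
  refine Submodule.span_le.2 ?_
  rintro _ ⟨s, rfl⟩
  exact Submodule.mem_iSup_of_mem _ (Submodule.subset_span ⟨s, rfl, rfl⟩)

theorem mulVec_AF_injective : Function.Injective AF.mulVec :=
  Matrix.mulVec_injective_of_det_ne_zero (by decide)

section Levels

/-- The sum of the root spaces whose level, the coefficient of `α₃`, satisfies `P`. -/
noncomputable def levelSpan (P : ℤ → Prop) : Submodule ℂ (gA AF) :=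
  ⨆ (c : Fin 3 → ℤ) (_ : P (c 2)), rootSpace AF c

variable {P Q : ℤ → Prop} {c : Fin 3 → ℤ} {x : gA AF}

theorem rootSpace_le_levelSpan (hc : P (c 2)) : rootSpace AF c ≤ levelSpan P :=
  le_iSup₂_of_le c hc le_rfl

theorem levelSpan_le_comap (hx : x ∈ rootSpace AF c) (hPQ : ∀ n, P n → Q (c 2 + n)) :
    levelSpan P ≤ (levelSpan Q).comap (ad ℂ (gA AF) x) :=
  iSup₂_le fun _ hd _ hy => rootSpace_le_levelSpan (hPQ _ hd) (lie_mem_rootSpace hx hy)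

theorem extremalSpan_le_levelSpan : adLoopAF.extremalSpan (Ebar AF 2) ≤ levelSpan (· = 1) :=
  extremalSpan_le_iSup_wordSpan.trans <| iSup₂_le fun c n =>
    (wordSpan_le_rootSpace c n).trans (rootSpace_le_levelSpan rfl)

/-- The elements of level zero that preserve the span of the extremal vectors and their
descendants. -/
noncomputable def levelZeroStabilizer : Submodule ℂ (gA AF) :=
  levelSpan (· = 0) ⊓ (lieStabilizer (adLoopAF.extremalSpan (Ebar AF 2))).toSubmodule

/-- An upper bound for the positive part of `𝔉`, sorted by levels `0`, `1` and at least `2`. -/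
noncomputable def levelBound : Submodule ℂ (gA AF) :=
  levelZeroStabilizer ⊔ adLoopAF.extremalSpan (Ebar AF 2) ⊔ levelSpan (2 ≤ ·)

theorem levelBound_le_comap_of_level_eq_zero (hx : x ∈ rootSpace AF c) (hc : c 2 = 0)
    (hstab : x ∈ lieStabilizer (adLoopAF.extremalSpan (Ebar AF 2))) :
    levelBound ≤ levelBound.comap (ad ℂ (gA AF) x) := by
  have levelZero : levelZeroStabilizer ≤ levelZeroStabilizer.comap (ad ℂ (gA AF) x) := by
    intro z hz
    have level_eq_zero : ⁅x, z⁆ ∈ levelSpan (· = 0) :=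
      levelSpan_le_comap (P := (· = 0)) (Q := (· = 0)) hx (fun n hn => by rw [hc, hn, add_zero])
        hz.1
    exact ⟨level_eq_zero, LieSubalgebra.lie_mem _ hstab hz.2⟩
  have levelOne : adLoopAF.extremalSpan (Ebar AF 2) ≤
      (adLoopAF.extremalSpan (Ebar AF 2)).comap (ad ℂ (gA AF) x) := hstab
  have levelTwo : levelSpan (2 ≤ ·) ≤ (levelSpan (2 ≤ ·)).comap (ad ℂ (gA AF) x) :=
    levelSpan_le_comap hx fun n hn => by rwa [hc, zero_add]
  exact sup_le
    (sup_le (levelZero.trans (Submodule.comap_mono (le_sup_left.trans le_sup_left)))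
      (levelOne.trans (Submodule.comap_mono (le_sup_right.trans le_sup_left))))
    (levelTwo.trans (Submodule.comap_mono le_sup_right))

theorem levelBound_le_comap_Ebar_two :
    levelBound ≤ levelBound.comap (ad ℂ (gA AF) (Ebar AF 2)) := by
  have levelZero : levelZeroStabilizer ≤
      (adLoopAF.extremalSpan (Ebar AF 2)).comap (ad ℂ (gA AF) (Ebar AF 2)) := by
    intro z hz
    have stab : z ∈ lieStabilizer (adLoopAF.extremalSpan (Ebar AF 2)) := hz.2
    rw [Submodule.mem_comap, ad_apply, ← lie_skew]
    exact neg_mem (stab (adLoopAF.mem_extremalSpan_self))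
  have level_pos {P : ℤ → Prop} (hP : ∀ n, P n → 1 ≤ n) :
      levelSpan P ≤ levelBound.comap (ad ℂ (gA AF) (Ebar AF 2)) :=
    (levelSpan_le_comap (Q := (2 ≤ ·)) Ebar_two_mem_rootSpace fun n hn =>
      add_le_add_right (hP n hn) 1).trans (Submodule.comap_mono le_sup_right)
  refine sup_le (sup_le ?_ ?_) ?_
  · exact levelZero.trans (Submodule.comap_mono (le_sup_right.trans le_sup_left))
  · exact extremalSpan_le_levelSpan.trans (level_pos fun n hn => hn.ge)
  · exact level_pos fun n hn => one_le_two.trans hn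

theorem positivePart_le_levelBound : (chevalleyGenerators AF).positivePart ≤ levelBound := by
  have stab_zero : Ebar AF 0 ∈ lieStabilizer (adLoopAF.extremalSpan (Ebar AF 2)) :=
    isVacuum_adLoopAF.extremalSpan_le_comap_e 0
  have stab_one : Ebar AF 1 ∈ lieStabilizer (adLoopAF.extremalSpan (Ebar AF 2)) :=
    isVacuum_adLoopAF.extremalSpan_le_comap_f 0
  have levelZero_le : levelZeroStabilizer ≤ levelBound := le_sup_left.trans le_sup_left
  have levelOne_le : adLoopAF.extremalSpan (Ebar AF 2) ≤ levelBound :=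
    le_sup_right.trans le_sup_left
  have Ebar_zero_mem : Ebar AF 0 ∈ levelSpan (· = 0) :=
    rootSpace_le_levelSpan (P := (· = 0)) (c := ![1, 0, 0]) rfl Ebar_zero_mem_rootSpace
  have Ebar_one_mem : Ebar AF 1 ∈ levelSpan (· = 0) :=
    rootSpace_le_levelSpan (P := (· = 0)) (c := ![0, 1, 0]) rfl Ebar_one_mem_rootSpace
  refine ChevalleyTriple.positivePart_le _ (fun i => ?_) fun j => ?_
  · match i with
    | 0 => exact levelZero_le ⟨Ebar_zero_mem, stab_zero⟩
    | 1 => exact levelZero_le ⟨Ebar_one_mem, stab_one⟩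
    | 2 => exact levelOne_le (adLoopAF.mem_extremalSpan_self)
  · match j with
    | 0 => exact levelBound_le_comap_of_level_eq_zero Ebar_zero_mem_rootSpace rfl stab_zero
    | 1 => exact levelBound_le_comap_of_level_eq_zero Ebar_one_mem_rootSpace rfl stab_one
    | 2 => exact levelBound_le_comap_Ebar_two

theorem swap_positivePart_le_levelSpan :
    (chevalleyGenerators AF).swap.positivePart ≤ levelSpan (· ≤ 0) := by
  have level_nonpos (i : Fin 3) : (-Pi.single i 1 : Fin 3 → ℤ) 2 ≤ 0 := by
    fin_cases i <;> decide
  exact ChevalleyTriple.positivePart_le _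
    (fun i => rootSpace_le_levelSpan (level_nonpos i) (Fbar_mem_rootSpace i)) fun j =>
      levelSpan_le_comap (Fbar_mem_rootSpace j) fun n hn => add_nonpos (level_nonpos j) hn

theorem cartan_le_levelSpan : (chevalleyGenerators AF).cartan ≤ levelSpan (· ≤ 0) := by
  refine Submodule.span_le.2 ?_
  rintro _ ⟨i, rfl⟩
  exact rootSpace_le_levelSpan (P := (· ≤ 0)) (c := 0) le_rfl (Hbar_mem_rootSpace i)

open Classical in
theorem rootSpace_levelOneWeight (c n : ℤ) : rootSpace AF (levelOneWeight c n) = wordSpan c n := by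
  let W (w : Fin 3 → ℤ) : Submodule ℂ (gA AF) :=
    if w 2 = 1 then wordSpan (w 0 - w 1) (w 1 - (w 0 - w 1) ^ 2) else rootSpace AF w
  have W_levelOneWeight (c n : ℤ) : W (levelOneWeight c n) = wordSpan c n := by
    simp [W, levelOneWeight]
  have W_le : W ≤ rootSpace AF := by
    intro w
    by_cases hw : w 2 = 1
    · have vec_eq : ![w 0, w 1, 1] = w := by
        rw [← hw]
        exact List.ofFn_injective rfl
      refine (if_pos hw).le.trans ((wordSpan_le_rootSpace _ _).trans ?_)
      rw [levelOneWeight_eq, vec_eq]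
    · exact (if_neg hw).le
  have levelSpan_le {P : ℤ → Prop} (hP : ¬P 1) : levelSpan P ≤ ⨆ w, W w :=
    iSup₂_le fun w hw =>
      (if_neg fun h : w 2 = 1 => hP (h ▸ hw) : W w = rootSpace AF w).ge.trans (le_iSup W w)
  have extremalSpan_le : adLoopAF.extremalSpan (Ebar AF 2) ≤ ⨆ w, W w :=
    extremalSpan_le_iSup_wordSpan.trans <| iSup₂_le fun c n =>
      (W_levelOneWeight c n).ge.trans (le_iSup W _)
  have W_iSup : ⨆ w, W w = ⊤ := by
    rw [eq_top_iff, ← triangularSpan_chevalleyGenerators]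
    refine sup_le (sup_le (positivePart_le_levelBound.trans ?_) ?_) ?_
    · exact sup_le (sup_le (inf_le_left.trans (levelSpan_le (by decide))) extremalSpan_le)
        (levelSpan_le (by decide))
    · exact cartan_le_levelSpan.trans (levelSpan_le (by decide))
    · exact swap_positivePart_le_levelSpan.trans (levelSpan_le (by decide))
  have W_eq : W = rootSpace AF :=
    ((iSupIndep_rootSpace mulVec_AF_injective).le_iff_eq_of_iSup_eq_top W_iSup).1 W_le
  rw [← W_eq, W_levelOneWeight]

end Levels

section Partitions

/-- The words in the operators `h i` are indexed by partitions, with `h i` for each part `i + 1`. -/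
noncomputable def partitionWord (c : ℤ) {m : ℕ} (q : m.Partition) : gA AF :=
  levelOneWord c (q.parts.map Nat.pred)

theorem map_succ_map_pred_parts {m : ℕ} (q : m.Partition) :
    (q.parts.map Nat.pred).map Nat.succ = q.parts := by
  rw [Multiset.map_map]
  exact (Multiset.map_congr rfl fun i hi => Nat.succ_pred_eq_of_pos (q.parts_pos hi)).trans
    (Multiset.map_id _)

theorem linearIndependent_partitionWord (c : ℤ) (m : ℕ) :
    LinearIndependent ℂ fun q : m.Partition => partitionWord c q := by
  refine (linearIndependent_adLoopAF_h_extremal c).comp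
    (fun q : m.Partition => q.parts.map Nat.pred) fun q r hqr => Nat.Partition.ext ?_
  rw [← map_succ_map_pred_parts q, ← map_succ_map_pred_parts r]
  exact congrArg (Multiset.map Nat.succ) hqr

theorem wordSpan_natCast (c : ℤ) (m : ℕ) :
    wordSpan c m = Submodule.span ℂ (Set.range fun q : m.Partition => partitionWord c q) := by
  refine congrArg (Submodule.span ℂ) (subset_antisymm ?_ ?_)
  · rintro _ ⟨s, hs, rfl⟩
    refine ⟨⟨s.map Nat.succ, fun hi => ?_, Int.natCast_inj.1 hs⟩, ?_⟩
    · obtain ⟨j, -, rfl⟩ := Multiset.mem_map.1 hi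
      exact Nat.succ_pos j
    · exact congrArg (levelOneWord c) ((Multiset.map_map _ _ s).trans (Multiset.map_id s))
  · rintro _ ⟨q, rfl⟩
    refine ⟨q.parts.map Nat.pred, ?_, rfl⟩
    rw [Set.mem_ofPred_eq, map_succ_map_pred_parts, q.parts_sum]

theorem mult_levelOneWeight (c : ℤ) (m : ℕ) : mult AF (levelOneWeight c m) = p m := by
  rw [mult, rootSpace_levelOneWeight, wordSpan_natCast,
    finrank_span_eq_card (linearIndependent_partitionWord c m), p]

end Partitions

theorem normAF_levelOne (a b : ℤ) : normAF ![a, b, 1] = 2 * ((a - b) ^ 2 - b + 1) := by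
  simp only [normAF, Fin.sum_univ_three, AF, Matrix.of_apply, Matrix.cons_val]
  ring

end KacMoody

theorem feingold_frenkel_level_one_general (a b : ℤ) (hnorm : normAF ![a, b, 1] ≤ 2) :
    KacMoody.mult AF ![a, b, 1] = p ((1 - normAF ![a, b, 1] / 2).toNat) := by
  rw [KacMoody.normAF_levelOne] at hnorm ⊢
  obtain ⟨m, hm⟩ := Int.eq_ofNat_of_zero_le (a := b - (a - b) ^ 2) (by linarith)
  rw [← KacMoody.levelOneWeight_eq, hm, KacMoody.mult_levelOneWeight,
    Int.mul_ediv_cancel_left _ two_ne_zero]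
  congr 1
  omega

/-- **(Feingold–Frenkel level-1 root multiplicities.)** For `𝔉 = g(A_F)` and
`α = aα₁ + bα₂ + α₃` with `(α|α) ≤ 0`, we have `mult(α) = p(1 − (α|α)/2)`. -/
theorem feingold_frenkel_level_one (a b : ℕ)
    (hnorm : normAF ![(a : ℤ), (b : ℤ), 1] ≤ 0) :
    KacMoody.mult AF ![(a : ℤ), (b : ℤ), 1] =
      p ((1 - normAF ![(a : ℤ), (b : ℤ), 1] / 2).toNat) :=
  feingold_frenkel_level_one_general a b (hnorm.trans zero_le_two)
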